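/- arXiv:2302.05946 — 2 statements merged into one kernel-verified Lean document; each statement's English description precedes it below -/
import Mathlib

section
/- For every number field K there exists a constant c_K > 0, depending only on K, such that the following holds: if A = {a_1 + I_1, …, a_n + I_n} is a covering system of O_K of multiplicity s whose moduli I_1, …, I_n are all distinguishable ideals, then min_{1 ≤ i ≤ n} N(I_i) ≤ exp(c_K · log²(s+1) / log log(s+2)). -/
set_option maxHeartbeats 1000000
set_option synthInstance.maxHeartbeats 1000000

open scoped Classical
open NumberField

/-- `p` is the unique prime ideal factor of `I` of largest norm. -/
def IsPmin {K : Type*} [Field K] [NumberField K] (I p : Ideal (𝓞 K)) : Prop :=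
  p.IsPrime ∧ p ∣ I ∧ ∀ q : Ideal (𝓞 K), q.IsPrime → q ∣ I → q ≠ p →
    Ideal.absNorm q < Ideal.absNorm p

/-- A nonzero proper ideal is distinguishable if it has a unique prime factor of largest norm. -/
def Distinguishable {K : Type*} [Field K] [NumberField K] (I : Ideal (𝓞 K)) : Prop :=
  I ≠ ⊥ ∧ I ≠ ⊤ ∧ ∃ p : Ideal (𝓞 K), IsPmin I p

/-!
The proof follows the distortion method of Balister, Bollobás, Morris, Sahasrabudhe and Tiba.

By the Chinese remainder theorem a covering system becomes a covering of a finite product of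
quotients `R ⧸ P ^ m`, one for each prime ideal `P` which divides a modulus, by boxes. Start with
the uniform probability measure and treat the primes one after the other by increasing norm. At the
prime `P`, redistribute the mass within the fibres in the direction of `P` away from the boxes whose
largest prime is `P`. As the density in a fibre is never more than doubled, the mass which remains
on these boxes is bounded by the second moment of their density in the fibres, and
`exp (64 * ∑ 1 / N Q)`, with `Q` ranging over the primes of norm at most `N P`, bounds the Euler
product which controls this moment. A weak form of Mertens' theorem makes the second moments
`O(s² (N P) ^ (-3/2))`, so that the primes of norm greater than `y = (C * (s + 1)) ^ 8` contribute
at most `1/4`. The measure of the boxes which involve only primes of norm at most `y` is the sum of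
the reciprocals of the norms of the corresponding moduli. If all moduli have norm greater than `X`,
then Rankin's trick bounds this sum by `1/4` as well once `X` is the bound in the theorem, and the
boxes cannot cover everything.
-/

namespace MinimumModulus

open Finset Function
open scoped BigOperators

section Density

variable {α : Type*}

lemma indicator_one_nonneg (B : Set α) (x : α) : 0 ≤ B.indicator (1 : α → ℝ) x :=
  Set.indicator_nonneg (fun _ _ ↦ zero_le_one) x

lemma indicator_one_le_one (B : Set α) (x : α) : B.indicator (1 : α → ℝ) x ≤ 1 :=
  Set.indicator_le_self' (fun _ _ ↦ zero_le_one) x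

lemma indicator_biUnion_le_sum {ι : Type*} (s : Finset ι) (B : ι → Set α) :
    (⋃ k ∈ s, B k).indicator (1 : α → ℝ) ≤ ∑ k ∈ s, (B k).indicator 1 := by
  intro x
  rw [Finset.sum_apply]
  have hnonneg : ∀ k ∈ s, 0 ≤ (B k).indicator (1 : α → ℝ) x :=
    fun k _ ↦ indicator_one_nonneg (B k) x
  by_cases hx : x ∈ ⋃ k ∈ s, B k
  · obtain ⟨k, hk, hxk⟩ := Set.mem_iUnion₂.1 hx
    calc (⋃ k ∈ s, B k).indicator 1 x = (B k).indicator (1 : α → ℝ) x := by simp [hx, hxk]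
      _ ≤ ∑ k ∈ s, (B k).indicator 1 x := single_le_sum hnonneg hk
  · rw [Set.indicator_of_notMem hx]
    exact sum_nonneg hnonneg

variable [Fintype α]

/-- The probability of `A` under the uniform distribution on a finite type. -/
noncomputable def density (A : Set α) : ℝ := 𝔼 x, A.indicator (1 : α → ℝ) x

lemma density_nonneg (A : Set α) : 0 ≤ density A :=
  expect_nonneg fun x _ ↦ indicator_one_nonneg A x

lemma density_le_one [Nonempty α] (A : Set α) : density A ≤ 1 :=
  expect_le univ_nonempty fun x _ ↦ indicator_one_le_one A x

/-- The bound which the distorted measures satisfy in a coordinate where the uniform one has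
`density A`: the distortion doubles probabilities at most, and keeps them below one. -/
noncomputable def cappedDensity (A : Set α) : ℝ := min 1 (2 * density A)

lemma cappedDensity_nonneg (A : Set α) : 0 ≤ cappedDensity A :=
  le_min zero_le_one (mul_nonneg zero_le_two (density_nonneg A))

lemma density_le_cappedDensity [Nonempty α] (A : Set α) : density A ≤ cappedDensity A :=
  le_min (density_le_one A) (le_mul_of_one_le_left (density_nonneg A) one_le_two)

end Density

section FiberAverage

variable {J : Type*} {Ω : J → Type*}

lemma apply_update_of_dependsOn {α : Type*} {w : (∀ j, Ω j) → α} {p : J}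
    (hw : DependsOn w {p}ᶜ) (x : ∀ j, Ω j) (t : Ω p) : w (update x p t) = w x :=
  hw fun _ hj ↦ update_of_ne hj t x

lemma dependsOn_mem_pi (S : Set J) (A : ∀ j, Set (Ω j)) : DependsOn (· ∈ S.pi A) S :=
  fun _ _ hxy ↦ propext <| forall₂_congr fun j hj ↦ by rw [hxy j hj]

lemma dependsOn_indicator {S : Set J} {B : Set (∀ j, Ω j)} (hB : DependsOn (· ∈ B) S) :
    DependsOn (B.indicator (1 : (∀ j, Ω j) → ℝ)) S := fun x y hxy ↦ by
  have hmem : x ∈ B ↔ y ∈ B := iff_of_eq (hB hxy)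
  simp only [Set.indicator_apply, hmem, Pi.one_apply]

lemma indicator_insert_pi (p : J) (S : Set J) (A : ∀ j, Set (Ω j)) (x : ∀ j, Ω j) :
    ((insert p S).pi A).indicator (1 : (∀ j, Ω j) → ℝ) x =
      (A p).indicator 1 (x p) * (S.pi A).indicator 1 x := by
  by_cases hp : x p ∈ A p <;> simp [Set.indicator_apply, Set.insert_pi, hp]

variable [∀ j, Fintype (Ω j)]

/-- The average of `f` over the line through `x` in the direction of the coordinate `p`: the
conditional expectation of `f` given all coordinates other than `p`. -/
noncomputable def fiberAvg (p : J) (f : (∀ j, Ω j) → ℝ) (x : ∀ j, Ω j) : ℝ :=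
  𝔼 t, f (update x p t)

lemma fiberAvg_mono {f g : (∀ j, Ω j) → ℝ} (h : f ≤ g) (p : J) : fiberAvg p f ≤ fiberAvg p g :=
  fun x ↦ expect_le_expect fun t _ ↦ h (update x p t)

lemma fiberAvg_nonneg {f : (∀ j, Ω j) → ℝ} (h : 0 ≤ f) (p : J) : 0 ≤ fiberAvg p f :=
  fun x ↦ expect_nonneg fun t _ ↦ h (update x p t)

lemma fiberAvg_sum {ι : Type*} (s : Finset ι) (f : ι → (∀ j, Ω j) → ℝ) (p : J) :
    fiberAvg p (∑ k ∈ s, f k) = ∑ k ∈ s, fiberAvg p (f k) := by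
  ext x
  simp only [fiberAvg, Finset.sum_apply, expect_sum_comm]

lemma fiberAvg_indicator_pi {p : J} {S : Set J} (hp : p ∉ S) (A : ∀ j, Set (Ω j))
    (x : ∀ j, Ω j) :
    fiberAvg p (((insert p S).pi A).indicator 1) x =
      density (A p) * (S.pi A).indicator (1 : (∀ j, Ω j) → ℝ) x := by
  have hS : DependsOn ((S.pi A).indicator (1 : (∀ j, Ω j) → ℝ)) {p}ᶜ :=
    (dependsOn_indicator (dependsOn_mem_pi S A)).mono (Set.subset_compl_singleton_iff.2 hp)
  simp only [fiberAvg, indicator_insert_pi, apply_update_of_dependsOn hS, update_self,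
    ← expect_mul, density]

lemma dependsOn_fiberAvg (p : J) {S : Set J} {f : (∀ j, Ω j) → ℝ} (hf : DependsOn f S) :
    DependsOn (fiberAvg p f) (S \ {p}) := by
  intro x y hxy
  refine expect_congr rfl fun t _ ↦ hf fun j hj ↦ ?_
  rcases eq_or_ne j p with rfl | hjp
  · simp
  · simp [hjp, hxy j ⟨hj, hjp⟩]

lemma dependsOn_fiberAvg_compl (p : J) (f : (∀ j, Ω j) → ℝ) :
    DependsOn (fiberAvg p f) {p}ᶜ := by
  simpa only [Set.compl_eq_univ_sdiff] using dependsOn_fiberAvg p (dependsOn_univ f)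

variable [Fintype J] [∀ j, Nonempty (Ω j)]

lemma expect_fiberAvg (p : J) (f : (∀ j, Ω j) → ℝ) : 𝔼 x, fiberAvg p f x = 𝔼 x, f x := by
  let swap : (∀ j, Ω j) × Ω p ≃ (∀ j, Ω j) × Ω p :=
    Involutive.toPerm (fun z ↦ (update z.1 p z.2, z.1 p)) fun z ↦ by simp
  calc 𝔼 x, fiberAvg p f x
      = 𝔼 z : (∀ j, Ω j) × Ω p, f (update z.1 p z.2) := (expect_product' univ univ _).symm
    _ = 𝔼 z : (∀ j, Ω j) × Ω p, f z.1 := Fintype.expect_equiv swap _ _ fun z ↦ rfl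
    _ = 𝔼 x, 𝔼 _t : Ω p, f x := expect_product' univ univ fun x _ ↦ f x
    _ = 𝔼 x, f x := by simp only [Fintype.expect_const]

lemma expect_mul_fiberAvg {p : J} {w : (∀ j, Ω j) → ℝ} (hw : DependsOn w {p}ᶜ)
    (f : (∀ j, Ω j) → ℝ) : 𝔼 x, w x * fiberAvg p f x = 𝔼 x, w x * f x := by
  rw [← expect_fiberAvg p fun x ↦ w x * f x]
  simp only [fiberAvg, apply_update_of_dependsOn hw, mul_expect]

lemma expect_mul_indicator_insert_pi {p : J} {S : Set J} (hp : p ∉ S) {w : (∀ j, Ω j) → ℝ}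
    (hw : DependsOn w {p}ᶜ) (A : ∀ j, Set (Ω j)) :
    𝔼 x, w x * ((insert p S).pi A).indicator 1 x =
      density (A p) * 𝔼 x, w x * (S.pi A).indicator 1 x := by
  rw [← expect_mul_fiberAvg hw, mul_expect]
  simp only [fiberAvg_indicator_pi hp, mul_left_comm]

lemma expect_indicator_pi (S : Finset J) (A : ∀ j, Set (Ω j)) :
    𝔼 x, ((S : Set J).pi A).indicator (1 : (∀ j, Ω j) → ℝ) x = ∏ j ∈ S, density (A j) := by
  induction S using Finset.induction with
  | empty => simp
  | insert p S hp ih =>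
    have h := expect_mul_indicator_insert_pi (w := 1) (mem_coe.not.2 hp)
      (dependsOn_const (1 : ℝ) |>.mono (Set.empty_subset _)) A
    simp only [Pi.one_apply, one_mul] at h
    rw [coe_insert, h, ih, prod_insert hp]

end FiberAverage

section Distortion

/-- The factor by which a weight is changed at a point, if the bad set has density `a` in the
fibre of the point and `b` is the value of the indicator function of the bad set there. A fibre
with fewer bad points than good ones is made to avoid the bad set altogether; on the other fibres
the good points are doubled. -/
noncomputable def distortionFactor (a b : ℝ) : ℝ :=
  if a < 1 / 2 then (1 - b) / (1 - a) else 2 - b / a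

variable {a b : ℝ}

lemma distortionFactor_self (a : ℝ) : distortionFactor a a = 1 := by
  unfold distortionFactor
  split_ifs with ha
  · exact div_self (by linarith)
  · rw [div_self (by linarith)]
    norm_num

lemma distortionFactor_nonneg (hb : b ≤ 1) : 0 ≤ distortionFactor a b := by
  unfold distortionFactor
  split_ifs with ha
  · exact div_nonneg (by linarith) (by linarith)
  · rw [sub_nonneg, div_le_iff₀ (by linarith)]
    linarith

lemma distortionFactor_le_two (hb : 0 ≤ b) : distortionFactor a b ≤ 2 := by
  unfold distortionFactor
  split_ifs with ha
  · rw [div_le_iff₀ (by linarith)]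
    linarith
  · exact sub_le_self 2 (div_nonneg hb (by linarith))

lemma distortionFactor_one_mul_le (a : ℝ) : distortionFactor a 1 * a ≤ a ^ 2 := by
  unfold distortionFactor
  split_ifs with ha
  · simpa using sq_nonneg a
  · have ha0 : a ≠ 0 := by linarith
    rw [sub_mul, div_mul_cancel₀ 1 ha0]
    nlinarith [sq_nonneg (a - 1)]

/-- `distortionFactor a` is affine. -/
lemma expect_distortionFactor {α : Type*} [Fintype α] [Nonempty α] (a : ℝ) (f : α → ℝ) :
    𝔼 t, distortionFactor a (f t) = distortionFactor a (𝔼 t, f t) := by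
  unfold distortionFactor
  split_ifs <;> simp only [← expect_div, expect_sub_distrib, Fintype.expect_const]

variable {J : Type*} {Ω : J → Type*} [∀ j, Fintype (Ω j)] {p : J} {S : Set J}
  {w : (∀ j, Ω j) → ℝ} {B : Set (∀ j, Ω j)}

/-- The weight `w` redistributed within the fibres in the direction `p` so as to avoid the bad
set `B`. -/
noncomputable def distort (p : J) (B : Set (∀ j, Ω j)) (w : (∀ j, Ω j) → ℝ) (x : ∀ j, Ω j) : ℝ :=
  w x * distortionFactor (fiberAvg p (B.indicator 1) x) (B.indicator 1 x)

lemma distort_nonneg (hw : 0 ≤ w) : 0 ≤ distort p B w := fun x ↦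
  mul_nonneg (hw x)
    (distortionFactor_nonneg (indicator_one_le_one _ x))

lemma distort_le_two_mul (hw : 0 ≤ w) (x : ∀ j, Ω j) : distort p B w x ≤ 2 * w x := by
  rw [mul_comm]
  exact mul_le_mul_of_nonneg_left
    (distortionFactor_le_two (indicator_one_nonneg _ x)) (hw x)

lemma dependsOn_distort (hw : DependsOn w S) (hB : DependsOn (· ∈ B) (insert p S)) :
    DependsOn (distort p B w) (insert p S) := by
  intro x y hxy
  have hind := dependsOn_indicator hB
  have havg := (dependsOn_fiberAvg p hind).mono Set.sdiff_subset
  simp only [distort, hw.mono (Set.subset_insert p S) hxy, hind hxy, havg hxy]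

variable [Fintype J] [∀ j, Nonempty (Ω j)]

lemma expect_distort_mul (hw : DependsOn w {p}ᶜ) {f : (∀ j, Ω j) → ℝ} (hf : DependsOn f {p}ᶜ) :
    𝔼 x, distort p B w x * f x = 𝔼 x, w x * f x := by
  set a := fiberAvg p (B.indicator 1)
  have ha : DependsOn a {p}ᶜ := dependsOn_fiberAvg_compl p _
  have havg : ∀ x, fiberAvg p (fun x ↦ distortionFactor (a x) (B.indicator 1 x)) x = 1 :=
    fun x ↦ by
      simp only [fiberAvg, apply_update_of_dependsOn ha, expect_distortionFactor]
      exact distortionFactor_self (a x)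
  have hwf : DependsOn (fun x ↦ w x * f x) {p}ᶜ := fun x y hxy ↦ by simp only [hw hxy, hf hxy]
  calc 𝔼 x, distort p B w x * f x
      = 𝔼 x, w x * f x * distortionFactor (a x) (B.indicator 1 x) := by
        simp only [distort, a, mul_right_comm]
    _ = 𝔼 x, w x * f x := by
        simp only [← expect_mul_fiberAvg hwf, havg, mul_one]

lemma expect_distort_mul_indicator_le (hw₀ : 0 ≤ w) (hw : DependsOn w {p}ᶜ) :
    𝔼 x, distort p B w x * B.indicator 1 x ≤ 𝔼 x, w x * fiberAvg p (B.indicator 1) x ^ 2 := by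
  set a := fiberAvg p (B.indicator 1)
  have ha : DependsOn a {p}ᶜ := dependsOn_fiberAvg_compl p _
  have hwa : DependsOn (fun x ↦ w x * distortionFactor (a x) 1) {p}ᶜ := fun x y hxy ↦ by
    simp only [hw hxy, ha hxy]
  calc 𝔼 x, distort p B w x * B.indicator 1 x
      = 𝔼 x, w x * distortionFactor (a x) 1 * B.indicator 1 x := by
        refine expect_congr rfl fun x _ ↦ ?_
        by_cases hx : x ∈ B <;> simp [distort, hx, a]
    _ = 𝔼 x, w x * (distortionFactor (a x) 1 * a x) := by
        rw [← expect_mul_fiberAvg hwa]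
        simp only [mul_assoc, a]
    _ ≤ 𝔼 x, w x * a x ^ 2 := expect_le_expect fun x _ ↦
        mul_le_mul_of_nonneg_left (distortionFactor_one_mul_le (a x)) (hw₀ x)

lemma expect_distort_mul_indicator_insert_pi_le (hw₀ : 0 ≤ w) (hw : DependsOn w {p}ᶜ)
    (hp : p ∉ S) (A : ∀ j, Set (Ω j)) :
    𝔼 x, distort p B w x * ((insert p S).pi A).indicator 1 x ≤
      cappedDensity (A p) * 𝔼 x, w x * (S.pi A).indicator 1 x := by
  have hS : DependsOn ((S.pi A).indicator (1 : (∀ j, Ω j) → ℝ)) {p}ᶜ :=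
    (dependsOn_indicator (dependsOn_mem_pi S A)).mono (Set.subset_compl_singleton_iff.2 hp)
  rw [cappedDensity, min_mul_of_nonneg _ _
    (expect_nonneg fun x _ ↦ mul_nonneg (hw₀ x) (indicator_one_nonneg _ x))]
  refine le_min ?_ ?_
  · rw [one_mul, ← expect_distort_mul (B := B) hw hS]
    refine expect_le_expect fun x _ ↦ mul_le_mul_of_nonneg_left ?_ (distort_nonneg hw₀ x)
    exact Set.indicator_le_indicator_of_subset
      (Set.pi_mono' (fun _ _ ↦ subset_rfl) (Set.subset_insert p S)) (fun _ ↦ zero_le_one) x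
  · rw [mul_assoc, ← expect_mul_indicator_insert_pi hp hw, mul_expect]
    refine expect_le_expect fun x _ ↦ ?_
    rw [← mul_assoc]
    exact mul_le_mul_of_nonneg_right (distort_le_two_mul hw₀ x) (indicator_one_nonneg _ x)

end Distortion

section Boxes

variable {J ι : Type*} {Ω : J → Type*} [Fintype J]

/-- The coordinates which are restricted in the box with sides `A j`. -/
noncomputable def boxSupport (A : ∀ j, Set (Ω j)) : Finset J := {j | A j ≠ Set.univ}

lemma univ_pi_eq_pi_of_boxSupport_subset {A : ∀ j, Set (Ω j)} {S : Finset J}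
    (h : boxSupport A ⊆ S) : Set.univ.pi A = (S : Set J).pi A := by
  refine (Set.pi_mono' (fun _ _ ↦ subset_rfl) (Set.subset_univ _)).antisymm fun x hx j _ ↦ ?_
  by_cases hj : A j = Set.univ
  · simp [hj]
  · exact hx j (h (by simp [boxSupport, hj]))

/-- The union of the boxes which restrict no coordinate outside `S`. -/
def coveredBy (A : ι → ∀ j, Set (Ω j)) (S : Finset J) : Set (∀ j, Ω j) :=
  ⋃ (k) (_ : boxSupport (A k) ⊆ S), Set.univ.pi (A k)

lemma dependsOn_mem_coveredBy (A : ι → ∀ j, Set (Ω j)) (S : Finset J) :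
    DependsOn (· ∈ coveredBy A S) S := by
  intro x y hxy
  simp only [coveredBy, Set.mem_iUnion, exists_prop]
  refine propext (exists_congr fun k ↦ and_congr_right fun hk ↦ ?_)
  rw [univ_pi_eq_pi_of_boxSupport_subset hk]
  exact iff_of_eq (dependsOn_mem_pi _ _ hxy)

variable [Fintype ι]

/-- The indices of the boxes which restrict `p` but no coordinate outside `insert p S`. -/
noncomputable def newBoxes (A : ι → ∀ j, Set (Ω j)) (S : Finset J) (p : J) : Finset ι :=
  {k | p ∈ boxSupport (A k) ∧ boxSupport (A k) ⊆ insert p S}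

/-- The union of the boxes in `newBoxes A S p`. -/
def newlyCovered (A : ι → ∀ j, Set (Ω j)) (S : Finset J) (p : J) : Set (∀ j, Ω j) :=
  ⋃ k ∈ newBoxes A S p, (insert p S : Set J).pi (A k)

lemma dependsOn_mem_newlyCovered (A : ι → ∀ j, Set (Ω j)) (S : Finset J) (p : J) :
    DependsOn (· ∈ newlyCovered A S p) (insert p S : Set J) := by
  intro x y hxy
  simp only [newlyCovered, Set.mem_iUnion, exists_prop]
  exact propext (exists_congr fun k ↦ and_congr_right fun _ ↦
    iff_of_eq (dependsOn_mem_pi _ _ hxy))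

lemma coveredBy_insert_subset (A : ι → ∀ j, Set (Ω j)) (S : Finset J) (p : J) :
    coveredBy A (insert p S) ⊆ coveredBy A S ∪ newlyCovered A S p := by
  intro x hx
  obtain ⟨k, hk, hxk⟩ := Set.mem_iUnion₂.1 hx
  by_cases hp : p ∈ boxSupport (A k)
  · rw [univ_pi_eq_pi_of_boxSupport_subset hk, coe_insert] at hxk
    exact .inr (Set.mem_biUnion (by simp [newBoxes, hp, hk]) hxk)
  · exact .inl (Set.mem_iUnion₂.2 ⟨k, (subset_insert_iff_of_notMem hp).1 hk, hxk⟩)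

end Boxes

section Sieve

variable {J : Type*} {Ω : J → Type*} [Fintype J] [∀ j, Fintype (Ω j)]

/-- `w` is the density of a probability measure which depends on the coordinates in `S` only and
gives to no box more than the product of the capped densities of its sides. -/
structure IsDistorted (S : Finset J) (w : (∀ j, Ω j) → ℝ) : Prop where
  nonneg : 0 ≤ w
  dependsOn : DependsOn w S
  expect_eq_one : 𝔼 x, w x = 1
  expect_pi_le (A : ∀ j, Set (Ω j)) :
    𝔼 x, w x * ((S : Set J).pi A).indicator 1 x ≤ ∏ j ∈ S, cappedDensity (A j)

variable {S : Finset J} {p : J} {w : (∀ j, Ω j) → ℝ} {B : Set (∀ j, Ω j)}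

lemma IsDistorted.dependsOn_compl (hw : IsDistorted S w) (hp : p ∉ S) : DependsOn w {p}ᶜ :=
  hw.dependsOn.mono (Set.subset_compl_singleton_iff.2 (mem_coe.not.2 hp))

/-- An upper bound for the second moment of the fibre averages of the boxes in `newBoxes A S p`
with respect to any measure which is distorted in the coordinates `S`. -/
noncomputable def secondMoment {ι : Type*} [Fintype ι] (A : ι → ∀ j, Set (Ω j)) (S : Finset J)
    (p : J) : ℝ :=
  ∑ k ∈ newBoxes A S p, ∑ l ∈ newBoxes A S p,
    density (A k p) * density (A l p) * ∏ q ∈ S, cappedDensity (A k q ∩ A l q)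

lemma IsDistorted.expect_mul_fiberAvg_sq_le {ι : Type*} [Fintype ι] (hw : IsDistorted S w)
    (hp : p ∉ S) (A : ι → ∀ j, Set (Ω j)) :
    𝔼 x, w x * fiberAvg p ((newlyCovered A S p).indicator 1) x ^ 2 ≤ secondMoment A S p := by
  set d : ι → ℝ := fun k ↦ density (A k p)
  set I : ι → (∀ j, Ω j) → ℝ := fun k ↦ ((S : Set J).pi (A k)).indicator 1
  have hI : ∀ k l x, I k x * I l x =
      ((S : Set J).pi fun q ↦ A k q ∩ A l q).indicator 1 x := fun k l x ↦ by
    simp only [I, Set.pi_inter_distrib, Set.inter_indicator_one, Pi.mul_apply]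
  have hle : ∀ x, fiberAvg p ((newlyCovered A S p).indicator 1) x ≤
      ∑ k ∈ newBoxes A S p, d k * I k x := fun x ↦ by
    refine (fiberAvg_mono (indicator_biUnion_le_sum _ _) p x).trans_eq ?_
    simp only [fiberAvg_sum, Finset.sum_apply, fiberAvg_indicator_pi (mem_coe.not.2 hp), d, I]
  calc 𝔼 x, w x * fiberAvg p ((newlyCovered A S p).indicator 1) x ^ 2
      ≤ 𝔼 x, w x * (∑ k ∈ newBoxes A S p, d k * I k x) ^ 2 :=
        expect_le_expect fun x _ ↦ mul_le_mul_of_nonneg_left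
          (pow_le_pow_left₀ (fiberAvg_nonneg (indicator_one_nonneg _) p x) (hle x) 2)
          (hw.nonneg x)
    _ = 𝔼 x, ∑ k ∈ newBoxes A S p, ∑ l ∈ newBoxes A S p, d k * d l * (w x * (I k x * I l x)) := by
        refine expect_congr rfl fun x _ ↦ ?_
        rw [sq, sum_mul_sum, mul_sum]
        refine sum_congr rfl fun k _ ↦ ?_
        rw [mul_sum]
        refine sum_congr rfl fun l _ ↦ ?_
        ring
    _ = ∑ k ∈ newBoxes A S p, ∑ l ∈ newBoxes A S p, d k * d l *
          𝔼 x, w x * ((S : Set J).pi fun q ↦ A k q ∩ A l q).indicator 1 x := by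
        simp only [expect_sum_comm, ← mul_expect, hI]
    _ ≤ secondMoment A S p := sum_le_sum fun k _ ↦ sum_le_sum fun l _ ↦
        mul_le_mul_of_nonneg_left (hw.expect_pi_le _)
          (mul_nonneg (density_nonneg _) (density_nonneg _))

variable [∀ j, Nonempty (Ω j)]

lemma isDistorted_one (S : Finset J) : IsDistorted S (1 : (∀ j, Ω j) → ℝ) where
  nonneg := zero_le_one
  dependsOn := (dependsOn_const (1 : ℝ)).mono (Set.empty_subset _)
  expect_eq_one := Fintype.expect_one
  expect_pi_le A := by
    simp only [Pi.one_apply, one_mul, expect_indicator_pi]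
    exact prod_le_prod (fun j _ ↦ density_nonneg _) fun j _ ↦ density_le_cappedDensity _

lemma IsDistorted.distort (hw : IsDistorted S w) (hp : p ∉ S)
    (hB : DependsOn (· ∈ B) (insert p S : Set J)) :
    IsDistorted (insert p S) (distort p B w) where
  nonneg := distort_nonneg hw.nonneg
  dependsOn := by
    rw [coe_insert]
    exact dependsOn_distort hw.dependsOn hB
  expect_eq_one := by
    simpa [hw.expect_eq_one] using expect_distort_mul (B := B) (hw.dependsOn_compl hp)
      ((dependsOn_const (1 : ℝ)).mono (Set.empty_subset _))
  expect_pi_le A := by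
    rw [coe_insert, prod_insert hp]
    exact (expect_distort_mul_indicator_insert_pi_le hw.nonneg (hw.dependsOn_compl hp)
      (mem_coe.not.2 hp) A).trans
        (mul_le_mul_of_nonneg_left (hw.expect_pi_le A) (cappedDensity_nonneg _))

variable {ι : Type*} [Fintype ι]

lemma IsDistorted.exists_insert (hw : IsDistorted S w) (hp : p ∉ S) (A : ι → ∀ j, Set (Ω j)) :
    ∃ w' : (∀ j, Ω j) → ℝ, IsDistorted (insert p S) w' ∧
      𝔼 x, w' x * (coveredBy A (insert p S)).indicator 1 x ≤
        (𝔼 x, w x * (coveredBy A S).indicator 1 x) + secondMoment A S p := by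
  set B := newlyCovered A S p
  have hcov : DependsOn ((coveredBy A S).indicator (1 : (∀ j, Ω j) → ℝ)) {p}ᶜ :=
    (dependsOn_indicator (dependsOn_mem_coveredBy A S)).mono
      (Set.subset_compl_singleton_iff.2 (mem_coe.not.2 hp))
  have hind : ∀ x, (coveredBy A (insert p S)).indicator (1 : (∀ j, Ω j) → ℝ) x ≤
      (coveredBy A S).indicator 1 x + B.indicator 1 x := fun x ↦ by
    refine (Set.indicator_le_indicator_of_subset (coveredBy_insert_subset A S p)
      (fun _ ↦ zero_le_one) x).trans ?_
    rw [← Pi.add_apply, ← Set.indicator_union_add_inter, Pi.add_apply]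
    exact le_add_of_nonneg_right (indicator_one_nonneg _ x)
  refine ⟨MinimumModulus.distort p B w, hw.distort hp (dependsOn_mem_newlyCovered A S p), ?_⟩
  calc 𝔼 x, MinimumModulus.distort p B w x * (coveredBy A (insert p S)).indicator 1 x
      ≤ 𝔼 x, (MinimumModulus.distort p B w x * (coveredBy A S).indicator 1 x +
          MinimumModulus.distort p B w x * B.indicator 1 x) :=
        expect_le_expect fun x _ ↦ (mul_le_mul_of_nonneg_left (hind x)
          (distort_nonneg hw.nonneg x)).trans_eq (mul_add _ _ _)
    _ ≤ (𝔼 x, w x * (coveredBy A S).indicator 1 x) + secondMoment A S p := by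
        rw [expect_add_distrib, expect_distort_mul (hw.dependsOn_compl hp) hcov]
        exact add_le_add_right ((expect_distort_mul_indicator_le hw.nonneg
          (hw.dependsOn_compl hp)).trans (hw.expect_mul_fiberAvg_sq_le hp A)) _

lemma expect_indicator_coveredBy_le (A : ι → ∀ j, Set (Ω j)) (S : Finset J) :
    𝔼 x, (coveredBy A S).indicator 1 x ≤
      ∑ k with boxSupport (A k) ⊆ S, ∏ j, density (A k j) := by
  have hcov : coveredBy A S =
      ⋃ k ∈ ({k | boxSupport (A k) ⊆ S} : Finset ι), ((univ : Finset J) : Set J).pi (A k) := by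
    simp [coveredBy]
  calc 𝔼 x, (coveredBy A S).indicator 1 x
      ≤ 𝔼 x, ∑ k with boxSupport (A k) ⊆ S,
          (((univ : Finset J) : Set J).pi (A k)).indicator (1 : (∀ j, Ω j) → ℝ) x :=
        expect_le_expect fun x _ ↦ by
          rw [hcov, ← Finset.sum_apply]
          exact indicator_biUnion_le_sum _ _ x
    _ = _ := by simp only [expect_sum_comm, expect_indicator_pi]

/-- The distortion method: the measure is distorted along the coordinates one by one, in the order
of increasing size `N`, beginning with the coordinates of size greater than `y`. -/
theorem one_le_sum_prod_density_add_sum_of_iUnion_eq_univ (A : ι → ∀ j, Set (Ω j))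
    (hA : ⋃ k, Set.univ.pi (A k) = Set.univ) (N : J → ℝ) (y : ℝ) (G : J → ℝ)
    (hG : ∀ p S, p ∉ S → (∀ q ∈ S, N q ≤ N p) → secondMoment A S p ≤ G p) :
    1 ≤ (∑ k with ∀ j ∈ boxSupport (A k), N j ≤ y, ∏ j, density (A k j)) +
      ∑ p with y < N p, G p := by
  set S₀ : Finset J := {j | N j ≤ y}
  set D := ∑ k with boxSupport (A k) ⊆ S₀, ∏ j, density (A k j)
  have hstep : ∀ T : Finset J, (∀ p ∈ T, y < N p) → ∃ w : (∀ j, Ω j) → ℝ,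
      IsDistorted (S₀ ∪ T) w ∧
        𝔼 x, w x * (coveredBy A (S₀ ∪ T)).indicator 1 x ≤ D + ∑ p ∈ T, G p := by
    intro T
    induction T using induction_on_max_value N with
    | empty =>
      intro _
      refine ⟨1, isDistorted_one _, ?_⟩
      simpa using expect_indicator_coveredBy_le A S₀
    | insert p T hpT hmax ih =>
      intro hT
      obtain ⟨hp, hT⟩ := forall_mem_insert .. |>.1 hT
      obtain ⟨w, hw, hle⟩ := ih hT
      have hpS : p ∉ S₀ ∪ T := by simp [S₀, hp, hpT]
      obtain ⟨w', hw', hle'⟩ := hw.exists_insert hpS A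
      rw [union_insert, sum_insert hpT]
      refine ⟨w', hw', ?_⟩
      have := hG p (S₀ ∪ T) hpS fun q hq ↦ (mem_union.1 hq).elim
        (fun hq ↦ ((mem_filter.1 hq).2.trans_lt hp).le) (hmax q)
      linarith
  obtain ⟨w, hw, hle⟩ := hstep {p | y < N p} (by simp)
  have huniv : S₀ ∪ ({p | y < N p} : Finset J) = univ := by
    ext p
    simp [S₀, le_or_gt]
  have hcov : coveredBy A univ = Set.univ := by simpa [coveredBy] using hA
  rw [huniv, hcov] at hle
  simpa [hw.expect_eq_one, D, S₀, subset_iff] using hle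

end Sieve

section EulerProduct

lemma sum_prod_le_mul_prod_sum {κ J X : Type*} [DecidableEq X] (A : Finset κ) (S : Finset J)
    (v : κ → J → X) {h : J → X → ℝ} (hh : ∀ j ∈ S, ∀ x, 0 ≤ h j x) {c : ℕ}
    (hc : ∀ k ∈ A, #{l ∈ A | ∀ j ∈ S, v l j = v k j} ≤ c) :
    ∑ k ∈ A, ∏ j ∈ S, h j (v k j) ≤ c * ∏ j ∈ S, ∑ x ∈ A.image (v · j), h j x := by
  let H : (S → X) → ℝ := fun f ↦ ∏ j : S, h j (f j)
  have hH : ∀ f, 0 ≤ H f := fun f ↦ prod_nonneg fun j _ ↦ hh j j.2 _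
  let r : κ → S → X := fun k j ↦ v k j
  have hfib : ∀ f ∈ A.image r, #{l ∈ A | r l = f} ≤ c := fun f hf ↦ by
    obtain ⟨k, hk, rfl⟩ := mem_image.1 hf
    simpa [r, funext_iff] using hc k hk
  calc ∑ k ∈ A, ∏ j ∈ S, h j (v k j)
      = ∑ k ∈ A, H (r k) :=
        sum_congr rfl fun k _ ↦ (prod_coe_sort S fun j ↦ h j (v k j)).symm
    _ = ∑ f ∈ A.image r, #{l ∈ A | r l = f} • H f := sum_comp H r
    _ ≤ ∑ f ∈ A.image r, c * H f := sum_le_sum fun f hf ↦ by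
        rw [nsmul_eq_mul]
        exact mul_le_mul_of_nonneg_right (Nat.cast_le.2 (hfib f hf)) (hH f)
    _ ≤ c * ∑ f ∈ Fintype.piFinset fun j : S ↦ A.image (v · j), H f := by
        rw [← mul_sum]
        refine mul_le_mul_of_nonneg_left
          (sum_le_sum_of_subset_of_nonneg (fun f hf ↦ ?_) fun f _ _ ↦ hH f) c.cast_nonneg
        obtain ⟨k, hk, rfl⟩ := mem_image.1 hf
        exact Fintype.mem_piFinset.2 fun j ↦ mem_image_of_mem _ hk
    _ = c * ∏ j ∈ S, ∑ x ∈ A.image (v · j), h j x := by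
        rw [← prod_univ_sum (fun j : S ↦ A.image (v · j)) fun j x ↦ h j x,
          prod_coe_sort S fun j ↦ ∑ x ∈ A.image (v · j), h j x]

lemma sum_sum_prod_le_mul_prod_sum {κ J X : Type*} [DecidableEq X] (A : Finset κ) (S : Finset J)
    (v : κ → J → X) {h : J → X × X → ℝ} (hh : ∀ j ∈ S, ∀ x, 0 ≤ h j x) {c : ℕ}
    (hc : ∀ k ∈ A, #{l ∈ A | ∀ j ∈ S, v l j = v k j} ≤ c) :
    ∑ k ∈ A, ∑ l ∈ A, ∏ j ∈ S, h j (v k j, v l j) ≤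
      c ^ 2 * ∏ j ∈ S, ∑ x ∈ (A ×ˢ A).image (fun z ↦ (v z.1 j, v z.2 j)), h j x := by
  rw [← sum_product', ← Nat.cast_pow]
  refine sum_prod_le_mul_prod_sum (A ×ˢ A) S (fun z j ↦ (v z.1 j, v z.2 j)) hh fun z hz ↦ ?_
  obtain ⟨hz₁, hz₂⟩ := mem_product.1 hz
  simp only [Prod.mk.injEq, forall_and, sq]
  rw [filter_product (fun k ↦ ∀ j ∈ S, v k j = v z.1 j) fun l ↦ ∀ j ∈ S, v l j = v z.2 j,
    card_product]
  exact Nat.mul_le_mul (hc _ hz₁) (hc _ hz₂)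

variable {r t : ℝ}

lemma sum_pow_le_inv_one_sub (D : Finset ℕ) (ht₀ : 0 ≤ t) (ht : t < 1) :
    ∑ i ∈ D, t ^ i ≤ (1 - t)⁻¹ := by
  rw [← tsum_geometric_of_lt_one ht₀ ht]
  exact (summable_geometric_of_lt_one ht₀ ht).sum_le_tsum D fun i _ ↦ pow_nonneg ht₀ i

lemma sum_pow_mul_pow_le_inv_one_sub_sq (D : Finset (ℕ × ℕ)) (ht₀ : 0 ≤ t) (ht : t < 1) :
    ∑ x ∈ D, t ^ x.1 * t ^ x.2 ≤ ((1 - t)⁻¹) ^ 2 :=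
  calc ∑ x ∈ D, t ^ x.1 * t ^ x.2
      ≤ ∑ x ∈ D.image Prod.fst ×ˢ D.image Prod.snd, t ^ x.1 * t ^ x.2 :=
        sum_le_sum_of_subset_of_nonneg subset_product fun x _ _ ↦
          mul_nonneg (pow_nonneg ht₀ _) (pow_nonneg ht₀ _)
    _ = (∑ i ∈ D.image Prod.fst, t ^ i) * ∑ j ∈ D.image Prod.snd, t ^ j := by
        rw [sum_mul_sum, ← sum_product']
    _ ≤ ((1 - t)⁻¹) ^ 2 := by
        rw [sq]
        exact mul_le_mul (sum_pow_le_inv_one_sub _ ht₀ ht) (sum_pow_le_inv_one_sub _ ht₀ ht)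
          (sum_nonneg fun j _ ↦ pow_nonneg ht₀ j) (inv_nonneg.2 (sub_nonneg.2 ht.le))

lemma sum_pow_le_exp (D : Finset ℕ) (ht₀ : 0 ≤ t) (ht : t ≤ 3 / 4) :
    ∑ i ∈ D, t ^ i ≤ Real.exp (4 * t) :=
  calc ∑ i ∈ D, t ^ i ≤ (1 - t)⁻¹ := sum_pow_le_inv_one_sub D ht₀ (by linarith)
    _ ≤ 4 * t + 1 := inv_le_of_inv_le₀ (by linarith) (by
        rw [inv_le_iff_one_le_mul₀ (by linarith)]
        nlinarith)
    _ ≤ Real.exp (4 * t) := Real.add_one_le_exp _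

lemma pow_le_two_mul_mul_half_pow (hr₀ : 0 ≤ r) (hr : r ≤ 1 / 2) {i : ℕ} (hi : i ≠ 0) :
    r ^ i ≤ 2 * r * (1 / 2) ^ i := by
  obtain ⟨i, rfl⟩ := Nat.exists_eq_succ_of_ne_zero hi
  calc r ^ (i + 1) = r * r ^ i := pow_succ' r i
    _ ≤ r * (1 / 2) ^ i := by gcongr
    _ = 2 * r * (1 / 2) ^ (i + 1) := by ring

lemma sum_pow_mul_pow_le_of_ne_zero (D : Finset (ℕ × ℕ)) (hD : ∀ x ∈ D, x.1 ≠ 0 ∧ x.2 ≠ 0)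
    (hr₀ : 0 ≤ r) (hr : r ≤ 1 / 2) : ∑ x ∈ D, r ^ x.1 * r ^ x.2 ≤ 16 * r ^ 2 :=
  calc ∑ x ∈ D, r ^ x.1 * r ^ x.2
      ≤ ∑ x ∈ D, (2 * r * (1 / 2) ^ x.1) * (2 * r * (1 / 2) ^ x.2) :=
        sum_le_sum fun x hx ↦ mul_le_mul (pow_le_two_mul_mul_half_pow hr₀ hr (hD x hx).1)
          (pow_le_two_mul_mul_half_pow hr₀ hr (hD x hx).2) (by positivity) (by positivity)
    _ = (2 * r) ^ 2 * ∑ x ∈ D, (1 / 2 : ℝ) ^ x.1 * (1 / 2) ^ x.2 := by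
        rw [mul_sum]
        exact sum_congr rfl fun x _ ↦ by ring
    _ ≤ (2 * r) ^ 2 * ((1 - 1 / 2)⁻¹) ^ 2 := by
        gcongr
        exact sum_pow_mul_pow_le_inv_one_sub_sq D (by norm_num) (by norm_num)
    _ = 16 * r ^ 2 := by ring

lemma half_pow_max_le (i j : ℕ) : (1 / 2 : ℝ) ^ max i j ≤ (3 / 4) ^ i * (3 / 4) ^ j :=
  calc (1 / 2 : ℝ) ^ max i j ≤ ((3 / 4) ^ 2) ^ max i j := by gcongr; norm_num
    _ = (3 / 4) ^ (2 * max i j) := (pow_mul _ _ _).symm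
    _ ≤ (3 / 4) ^ (i + j) := pow_le_pow_of_le_one (by norm_num) (by norm_num) (by omega)
    _ = (3 / 4) ^ i * (3 / 4) ^ j := pow_add _ _ _

lemma sum_min_one_two_mul_pow_max_le_exp (D : Finset (ℕ × ℕ)) (hr₀ : 0 ≤ r) (hr : r ≤ 1 / 2) :
    ∑ x ∈ D, min 1 (2 * r ^ max x.1 x.2) ≤ Real.exp (64 * r) := by
  have hzero : ∀ x : ℕ × ℕ, min 1 (2 * r ^ max x.1 x.2) ≤
      (if x = 0 then 1 else 0) + 4 * r * ((3 / 4) ^ x.1 * (3 / 4) ^ x.2) := by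
    intro x
    split_ifs with hx
    · exact (min_le_left _ _).trans (le_add_of_nonneg_right (by positivity))
    · have hmax : max x.1 x.2 ≠ 0 := fun h ↦ hx (Prod.ext (by simp; omega) (by simp; omega))
      calc min 1 (2 * r ^ max x.1 x.2) ≤ 2 * r ^ max x.1 x.2 := min_le_right _ _
        _ ≤ 2 * (2 * r * (1 / 2) ^ max x.1 x.2) := by
          gcongr
          exact pow_le_two_mul_mul_half_pow hr₀ hr hmax
        _ = 4 * r * (1 / 2) ^ max x.1 x.2 := by ring
        _ ≤ 4 * r * ((3 / 4) ^ x.1 * (3 / 4) ^ x.2) := by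
          gcongr
          exact half_pow_max_le _ _
        _ = _ := (zero_add _).symm
  calc ∑ x ∈ D, min 1 (2 * r ^ max x.1 x.2)
      ≤ (∑ x ∈ D, if x = 0 then 1 else 0) + 4 * r * ∑ x ∈ D, (3 / 4 : ℝ) ^ x.1 * (3 / 4) ^ x.2 := by
        rw [mul_sum, ← sum_add_distrib]
        exact sum_le_sum fun x _ ↦ hzero x
    _ ≤ 1 + 4 * r * ((1 - 3 / 4)⁻¹) ^ 2 := by
        gcongr
        · rw [sum_ite_eq']
          split_ifs <;> norm_num
        · exact sum_pow_mul_pow_le_inv_one_sub_sq D (by norm_num) (by norm_num)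
    _ = 64 * r + 1 := by ring
    _ ≤ Real.exp (64 * r) := Real.add_one_le_exp _

variable {ι J : Type*} (A : Finset ι) {S : Finset J} {e : ι → J → ℕ} {s : ℕ}

lemma sum_prod_pow_le {t : J → ℝ} (ht : ∀ j ∈ S, t j ≤ 3 / 4) (ht₀ : ∀ j, 0 ≤ t j)
    (hs : ∀ k ∈ A, #{l ∈ A | ∀ j ∈ S, e l j = e k j} ≤ s) :
    ∑ k ∈ A, ∏ j ∈ S, t j ^ e k j ≤ s * Real.exp (4 * ∑ j ∈ S, t j) := by
  refine (sum_prod_le_mul_prod_sum A S e (h := fun j i ↦ t j ^ i)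
    (fun j _ i ↦ pow_nonneg (ht₀ j) i) hs).trans ?_
  rw [mul_sum, Real.exp_sum]
  gcongr with j hj
  · exact fun j _ ↦ sum_nonneg fun i _ ↦ pow_nonneg (ht₀ j) i
  · exact sum_pow_le_exp _ (ht₀ j) (ht j hj)

lemma sum_sum_pow_mul_pow_mul_prod_le {r : J → ℝ} (hr₀ : ∀ j, 0 ≤ r j) (hr : ∀ j, r j ≤ 1 / 2)
    {p : J} (hp : p ∉ S) (hA : ∀ k ∈ A, e k p ≠ 0)
    (hs : ∀ k ∈ A, #{l ∈ A | ∀ j ∈ insert p S, e l j = e k j} ≤ s) :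
    ∑ k ∈ A, ∑ l ∈ A, r p ^ e k p * r p ^ e l p *
        ∏ q ∈ S, min 1 (2 * r q ^ max (e k q) (e l q)) ≤
      s ^ 2 * (16 * r p ^ 2 * Real.exp (64 * ∑ q ∈ S, r q)) := by
  let h : J → ℕ × ℕ → ℝ :=
    update (fun q x ↦ min 1 (2 * r q ^ max x.1 x.2)) p fun x ↦ r p ^ x.1 * r p ^ x.2
  have hhp : h p = fun x ↦ r p ^ x.1 * r p ^ x.2 := update_self ..
  have hhq : ∀ q ∈ S, h q = fun x ↦ min 1 (2 * r q ^ max x.1 x.2) :=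
    fun q hq ↦ update_of_ne (ne_of_mem_of_not_mem hq hp) ..
  have hh₀ : ∀ j ∈ insert p S, ∀ x, 0 ≤ h j x := by
    refine forall_mem_insert .. |>.2 ⟨fun x ↦ ?_, fun q hq x ↦ ?_⟩
    · rw [hhp]
      exact mul_nonneg (pow_nonneg (hr₀ p) _) (pow_nonneg (hr₀ p) _)
    · rw [hhq q hq]
      exact le_min zero_le_one (mul_nonneg zero_le_two (pow_nonneg (hr₀ q) _))
  calc _ = ∑ k ∈ A, ∑ l ∈ A, ∏ j ∈ insert p S, h j (e k j, e l j) := by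
        refine sum_congr rfl fun k _ ↦ sum_congr rfl fun l _ ↦ ?_
        rw [prod_insert hp, hhp]
        exact congrArg _ (prod_congr rfl fun q hq ↦ by rw [hhq q hq])
    _ ≤ s ^ 2 * ∏ j ∈ insert p S, ∑ x ∈ (A ×ˢ A).image (fun z ↦ (e z.1 j, e z.2 j)), h j x :=
        sum_sum_prod_le_mul_prod_sum A _ e hh₀ hs
    _ ≤ s ^ 2 * (16 * r p ^ 2 * Real.exp (64 * ∑ q ∈ S, r q)) := by
        rw [prod_insert hp, mul_sum, Real.exp_sum]
        gcongr with q hq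
        · exact prod_nonneg fun q hq ↦ sum_nonneg fun x _ ↦ hh₀ q (mem_insert_of_mem hq) x
        · rw [hhp]
          refine sum_pow_mul_pow_le_of_ne_zero _ (fun x hx ↦ ?_) (hr₀ p) (hr p)
          obtain ⟨z, hz, rfl⟩ := mem_image.1 hx
          exact ⟨hA _ (mem_product.1 hz).1, hA _ (mem_product.1 hz).2⟩
        · exact fun q hq ↦ sum_nonneg fun x _ ↦ hh₀ q (mem_insert_of_mem hq) x
        · rw [hhq q hq]
          exact sum_min_one_two_mul_pow_max_le_exp _ (hr₀ q) (hr q)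

end EulerProduct

section GeometricBoxes

lemma density_eq_one_iff {α : Type*} [Fintype α] [Nonempty α] {A : Set α} :
    density A = 1 ↔ A = Set.univ := by
  refine ⟨fun h ↦ Set.eq_univ_of_forall fun x ↦ ?_, fun h ↦ by simp [h, density]⟩
  by_contra hx
  refine h.not_lt ((expect_lt_expect (fun y _ ↦ indicator_one_le_one A y)
    ⟨x, mem_univ x, by simp [hx]⟩).trans_eq (Fintype.expect_const (1 : ℝ)))

lemma density_mono {α : Type*} [Fintype α] {A B : Set α} (h : A ⊆ B) : density A ≤ density B :=
  expect_le_expect fun x _ ↦ Set.indicator_le_indicator_of_subset h (fun _ ↦ zero_le_one) x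

/-- The bound which the second moment method gives for the measure of the set of points first
covered when a prime of size `N p` is considered, if primes have the sizes `N` and no modulus
occurs more than `s` times. -/
noncomputable def newMeasureBound {J : Type*} [Fintype J] (N : J → ℝ) (s : ℕ) (p : J) : ℝ :=
  s ^ 2 * (16 * (N p)⁻¹ ^ 2 * Real.exp (64 * ∑ q with N q ≤ N p, (N q)⁻¹))

variable {J ι : Type*} {Ω : J → Type*} [Fintype J] [∀ j, Fintype (Ω j)]
  [∀ j, Nonempty (Ω j)] {A : ι → ∀ j, Set (Ω j)} {e : ι → J → ℕ} {N : J → ℝ} {s : ℕ}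

lemma mem_boxSupport_iff_ne_zero (hN : ∀ j, 2 ≤ N j)
    (hA : ∀ k j, density (A k j) = (N j)⁻¹ ^ e k j) {k : ι} {j : J} :
    j ∈ boxSupport (A k) ↔ e k j ≠ 0 := by
  have hlt : (N j)⁻¹ < 1 := inv_lt_one_of_one_lt₀ (by linarith [hN j])
  have hpos : 0 ≤ (N j)⁻¹ := inv_nonneg.2 (by linarith [hN j])
  rw [boxSupport, mem_filter_univ, ← density_eq_one_iff.ne, hA, not_iff_not]
  exact ⟨fun h ↦ by_contra fun he ↦ (pow_lt_one₀ hpos hlt he).ne h, fun h ↦ by rw [h, pow_zero]⟩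

variable [Fintype ι]

lemma secondMoment_le (hN : ∀ j, 2 ≤ N j) (hA : ∀ k j, density (A k j) = (N j)⁻¹ ^ e k j)
    (hs : ∀ k, #{l | e l = e k} ≤ s) {p : J} {S : Finset J} (hp : p ∉ S)
    (hS : ∀ q ∈ S, N q ≤ N p) : secondMoment A S p ≤ newMeasureBound N s p := by
  have hr : ∀ j, 0 ≤ (N j)⁻¹ := fun j ↦ inv_nonneg.2 (by linarith [hN j])
  have hr' : ∀ j, (N j)⁻¹ ≤ 1 / 2 := fun j ↦ by
    rw [← inv_eq_one_div]
    exact inv_anti₀ two_pos (hN j)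
  have hcapped : ∀ k l q, cappedDensity (A k q ∩ A l q) ≤
      min 1 (2 * (N q)⁻¹ ^ max (e k q) (e l q)) := fun k l q ↦ by
    refine min_le_min_left _ (mul_le_mul_of_nonneg_left ?_ zero_le_two)
    rcases max_choice (e k q) (e l q) with h | h <;> rw [h, ← hA]
    exacts [density_mono Set.inter_subset_left, density_mono Set.inter_subset_right]
  have hnew : ∀ k ∈ newBoxes A S p, e k p ≠ 0 ∧ ∀ j ∉ insert p S, e k j = 0 := fun k hk ↦ by
    simp only [newBoxes, mem_filter_univ, subset_iff, mem_boxSupport_iff_ne_zero hN hA] at hk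
    exact ⟨hk.1, fun j hj ↦ not_not.1 (mt (@hk.2 j) hj)⟩
  have hfiber : ∀ k ∈ newBoxes A S p, ∀ l ∈ newBoxes A S p,
      (∀ j ∈ insert p S, e l j = e k j) → e l = e k := fun k hk l hl heq ↦ funext fun j ↦ by
    by_cases hj : j ∈ insert p S
    · exact heq j hj
    · rw [(hnew l hl).2 j hj, (hnew k hk).2 j hj]
  calc secondMoment A S p
      ≤ ∑ k ∈ newBoxes A S p, ∑ l ∈ newBoxes A S p, (N p)⁻¹ ^ e k p * (N p)⁻¹ ^ e l p *
          ∏ q ∈ S, min 1 (2 * (N q)⁻¹ ^ max (e k q) (e l q)) := by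
        refine sum_le_sum fun k _ ↦ sum_le_sum fun l _ ↦ ?_
        rw [hA, hA]
        exact mul_le_mul_of_nonneg_left (prod_le_prod (fun q _ ↦ cappedDensity_nonneg _)
          fun q _ ↦ hcapped k l q) (mul_nonneg (pow_nonneg (hr p) _) (pow_nonneg (hr p) _))
    _ ≤ s ^ 2 * (16 * (N p)⁻¹ ^ 2 * Real.exp (64 * ∑ q ∈ S, (N q)⁻¹)) :=
        sum_sum_pow_mul_pow_mul_prod_le _ hr hr' hp (fun k hk ↦ (hnew k hk).1) fun k hk ↦
          (card_le_card fun l hl ↦ by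
            simp only [mem_filter, mem_univ, true_and] at hl ⊢
            exact hfiber k hk l hl.1 hl.2).trans (hs k)
    _ ≤ newMeasureBound N s p := by
        unfold newMeasureBound
        gcongr with q hq
        · exact fun j _ _ ↦ hr j
        · exact fun q hq ↦ mem_filter_univ _ |>.2 (hS q hq)

lemma one_le_sum_prod_inv_pow_add_sum_newMeasureBound (hN : ∀ j, 2 ≤ N j)
    (hA : ∀ k j, density (A k j) = (N j)⁻¹ ^ e k j) (hs : ∀ k, #{l | e l = e k} ≤ s)
    (hcov : ⋃ k, Set.univ.pi (A k) = Set.univ) (y : ℝ) :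
    1 ≤ (∑ k with ∀ j, e k j ≠ 0 → N j ≤ y, ∏ j, (N j)⁻¹ ^ e k j) +
      ∑ p with y < N p, newMeasureBound N s p := by
  simpa only [mem_boxSupport_iff_ne_zero hN hA, hA] using
    one_le_sum_prod_density_add_sum_of_iUnion_eq_univ A hcov N y (newMeasureBound N s)
      fun p S hp hS ↦ secondMoment_le hN hA hs hp hS

end GeometricBoxes

section ChineseRemainder

lemma density_preimage_singleton {G H : Type*} [AddGroup G] [Fintype G] [AddGroup H]
    {f : G →+ H} (hf : Surjective f) (b : H) : density (f ⁻¹' {b}) = (Nat.card H : ℝ)⁻¹ := by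
  have : Finite H := Finite.of_surjective f hf
  cases nonempty_fintype H
  have htranslate : ∀ c, density (f ⁻¹' {c}) = density (f ⁻¹' {b}) := fun c ↦ by
    obtain ⟨g, hg⟩ := hf (-c + b)
    refine Fintype.expect_equiv (Equiv.addRight g) _ _ fun x ↦ ?_
    simp [Set.indicator_apply, hg, ← add_assoc, add_neg_eq_zero]
  have hsum : ∑ c, density (f ⁻¹' {c}) = 1 := by
    simp [density, ← expect_sum_comm, Set.indicator_apply]
  simp only [htranslate, sum_const, card_univ, nsmul_eq_mul] at hsum
  rw [Nat.card_eq_fintype_card]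
  exact eq_inv_of_mul_eq_one_right hsum

variable {R : Type*} [CommRing R]

/-- The image in `R ⧸ Q` of the residue class of `a` modulo `I`, where `Q ≤ I`. -/
def residueClass {Q I : Ideal R} (h : Q ≤ I) (a : R) : Set (R ⧸ Q) :=
  Ideal.Quotient.factor h ⁻¹' {Ideal.Quotient.mk I a}

lemma mk_mem_residueClass {Q I : Ideal R} {h : Q ≤ I} {a x : R} :
    Ideal.Quotient.mk Q x ∈ residueClass h a ↔ x - a ∈ I := by
  simp [residueClass, Ideal.Quotient.eq]

variable [IsDedekindDomain R] [Module.Free ℤ R]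

lemma density_residueClass {Q I : Ideal R} [Fintype (R ⧸ Q)] (h : Q ≤ I) (a : R) :
    density (residueClass h a) = (Ideal.absNorm I : ℝ)⁻¹ :=
  density_preimage_singleton (f := (Ideal.Quotient.factor h).toAddMonoidHom)
    (Ideal.Quotient.factor_surjective h) _

variable [Module.Finite ℤ R]

lemma two_le_absNorm {P : Ideal R} (hP : Prime P) : 2 ≤ Ideal.absNorm P := by
  have hzero : Ideal.absNorm P ≠ 0 := Ideal.absNorm_eq_zero_iff.not.2 hP.ne_zero
  have hone : Ideal.absNorm P ≠ 1 := Ideal.absNorm_eq_one_iff.not.2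
    (Ideal.isUnit_iff.not.1 hP.not_isUnit)
  omega

theorem one_le_sum_inv_absNorm_add_sum_newMeasureBound {J ι : Type*} [Fintype J] [Fintype ι]
    {P : J → Ideal R} (hP : ∀ j, Prime (P j)) (hinj : Injective P) (a : ι → R) (e : ι → J → ℕ)
    {s : ℕ} (hs : ∀ k, #{l | e l = e k} ≤ s) (hcov : ∀ x, ∃ k, x - a k ∈ ∏ j, P j ^ e k j)
    (y : ℝ) :
    1 ≤ (∑ k with ∀ j, e k j ≠ 0 → (Ideal.absNorm (P j) : ℝ) ≤ y,
        ∏ j, (Ideal.absNorm (P j) : ℝ)⁻¹ ^ e k j) +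
      ∑ p with y < Ideal.absNorm (P p),
        newMeasureBound (fun j ↦ (Ideal.absNorm (P j) : ℝ)) s p := by
  set m : J → ℕ := fun j ↦ univ.sup (e · j)
  have hle : ∀ k j, P j ^ m j ≤ P j ^ e k j := fun k j ↦
    Ideal.pow_le_pow_right (le_sup (f := (e · j)) (mem_univ k))
  have hfinite : ∀ j, Finite (R ⧸ P j ^ m j) := fun j ↦
    Ideal.finiteQuotientOfFreeOfNeBot _ (pow_ne_zero _ (hP j).ne_zero)
  let _ : ∀ j, Fintype (R ⧸ P j ^ m j) := fun j ↦ Fintype.ofFinite _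
  refine one_le_sum_prod_inv_pow_add_sum_newMeasureBound
    (A := fun k j ↦ residueClass (hle k j) (a k)) (fun j ↦ mod_cast two_le_absNorm (hP j))
    (fun k j ↦ ?_) hs (Set.eq_univ_of_forall fun z ↦ ?_) y
  · rw [density_residueClass, map_pow, Nat.cast_pow, inv_pow]
  · choose x hx using fun j ↦ Ideal.Quotient.mk_surjective (z j)
    obtain ⟨u, hu⟩ := IsDedekindDomain.exists_forall_sub_mem_ideal (s := univ) P m
      (fun j _ ↦ hP j) (fun i _ j _ hij ↦ hinj.ne hij) fun j ↦ x j
    obtain ⟨k, hk⟩ := hcov u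
    refine Set.mem_iUnion.2 ⟨k, fun j _ ↦ ?_⟩
    rw [← hx j, ← (Ideal.Quotient.eq).2 (hu j (mem_univ j)), mk_mem_residueClass]
    exact Ideal.le_of_dvd (dvd_prod_of_mem _ (mem_univ j)) hk

end ChineseRemainder

section PrimeReciprocals

lemma eq_or_eq_swap_of_mul_eq_mul_of_prime {z w : ℕ × ℕ} (hz : z.1.Prime) (hw₁ : w.1.Prime)
    (hw₂ : w.2.Prime) (h : z.1 * z.2 = w.1 * w.2) : z = w ∨ z = w.swap := by
  rcases hz.dvd_mul.1 (Dvd.intro _ h) with hdvd | hdvd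
  · have hfst := (Nat.prime_dvd_prime_iff_eq hz hw₁).1 hdvd
    exact .inl (Prod.ext hfst (Nat.eq_of_mul_eq_mul_left hz.pos (by rw [h, hfst])))
  · have hfst := (Nat.prime_dvd_prime_iff_eq hz hw₂).1 hdvd
    refine .inr (Prod.ext hfst (Nat.eq_of_mul_eq_mul_left hz.pos ?_))
    rw [h, hfst, mul_comm, Prod.snd_swap]

lemma card_filter_mul_eq_le_two {U : Finset ℕ} (hU : ∀ p ∈ U, p.Prime) (n : ℕ) :
    #{z ∈ U ×ˢ U | z.1 * z.2 = n} ≤ 2 := by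
  rcases ({z ∈ U ×ˢ U | z.1 * z.2 = n} : Finset (ℕ × ℕ)).eq_empty_or_nonempty with h | ⟨w, hw⟩
  · simp [h]
  · simp only [mem_filter, mem_product] at hw
    refine (card_le_card (t := {w, w.swap}) fun z hz ↦ ?_).trans card_le_two
    simp only [mem_filter, mem_product] at hz
    rw [mem_insert, mem_singleton]
    exact eq_or_eq_swap_of_mul_eq_mul_of_prime (hU _ hz.1.1) (hU _ hw.1.1) (hU _ hw.1.2)
      (hz.2.trans hw.2.symm)

lemma sum_Icc_inv_le_one_add_two_mul_log {x : ℝ} (hx : 1 ≤ x) :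
    ∑ n ∈ Icc 1 ⌊x ^ 2⌋₊, (n : ℝ)⁻¹ ≤ 1 + 2 * Real.log x := by
  have h := harmonic_floor_le_one_add_log (x ^ 2) (one_le_pow₀ hx)
  rw [Real.log_pow, harmonic_eq_sum_Icc] at h
  push_cast at h
  exact h

/-- A weak form of Mertens' theorem, by squaring: a product of two primes is one in at most two
ways. -/
lemma sum_inv_le_sqrt_log_of_prime {U : Finset ℕ} (hU : ∀ p ∈ U, p.Prime) {x : ℝ} (hx : 2 ≤ x)
    (hUx : ∀ p ∈ U, (p : ℝ) ≤ x) : ∑ p ∈ U, (p : ℝ)⁻¹ ≤ 3 * √(Real.log x) := by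
  set prods := (U ×ˢ U).image fun z ↦ z.1 * z.2
  have hprods : prods ⊆ Icc 1 ⌊x ^ 2⌋₊ := fun n hn ↦ by
    obtain ⟨z, hz, rfl⟩ := mem_image.1 hn
    obtain ⟨hz₁, hz₂⟩ := mem_product.1 hz
    refine mem_Icc.2 ⟨Nat.mul_pos (hU _ hz₁).pos (hU _ hz₂).pos, Nat.le_floor ?_⟩
    rw [Nat.cast_mul, sq]
    exact mul_le_mul (hUx _ hz₁) (hUx _ hz₂) (Nat.cast_nonneg _) (by linarith)
  have hlog : Real.log 2 ≤ Real.log x := Real.log_le_log two_pos hx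
  have hsq : (∑ p ∈ U, (p : ℝ)⁻¹) ^ 2 ≤ 3 ^ 2 * Real.log x :=
    calc (∑ p ∈ U, (p : ℝ)⁻¹) ^ 2
        = ∑ z ∈ U ×ˢ U, ((z.1 * z.2 : ℕ) : ℝ)⁻¹ := by
          rw [sq, sum_mul_sum, sum_product]
          simp only [Nat.cast_mul, mul_inv]
      _ = ∑ n ∈ prods, #{z ∈ U ×ˢ U | z.1 * z.2 = n} • (n : ℝ)⁻¹ :=
          sum_comp (fun n : ℕ ↦ (n : ℝ)⁻¹) fun z : ℕ × ℕ ↦ z.1 * z.2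
      _ ≤ ∑ n ∈ prods, 2 • (n : ℝ)⁻¹ := sum_le_sum fun n _ ↦
          nsmul_le_nsmul_left (by positivity) (card_filter_mul_eq_le_two hU n)
      _ ≤ ∑ n ∈ Icc 1 ⌊x ^ 2⌋₊, 2 • (n : ℝ)⁻¹ :=
          sum_le_sum_of_subset_of_nonneg hprods fun n _ _ ↦ by positivity
      _ ≤ 2 * (1 + 2 * Real.log x) := by
          rw [← smul_sum, two_nsmul, ← two_mul]
          exact mul_le_mul_of_nonneg_left (sum_Icc_inv_le_one_add_two_mul_log (by linarith))
            zero_le_two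
      _ ≤ 3 ^ 2 * Real.log x := by linarith [Real.log_two_gt_d9]
  rw [← Real.sqrt_sq zero_le_three, ← Real.sqrt_mul (by positivity)]
  exact Real.le_sqrt_of_sq_le hsq

end PrimeReciprocals

section PrimeIdealSums

variable {R : Type*} [CommRing R] [IsDedekindDomain R] [Module.Finite ℤ R]

/-- The residue characteristic of a nonzero prime ideal `P`: the positive generator of the prime
ideal `P ∩ ℤ`. -/
noncomputable def residueChar (P : Ideal R) : ℕ := Ideal.absNorm (Ideal.under ℤ P)

lemma prime_residueChar {P : Ideal R} (hP : Prime P) : (residueChar P).Prime := by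
  have : P.IsPrime := Ideal.isPrime_of_prime hP
  have : NeZero P := ⟨hP.ne_zero⟩
  exact Nat.absNorm_under_prime P

variable [Module.Free ℤ R]

lemma residueChar_le_absNorm {P : Ideal R} (hP : Prime P) : residueChar P ≤ Ideal.absNorm P :=
  Nat.le_of_dvd (two_pos.trans_le (two_le_absNorm hP)) (Int.absNorm_under_dvd_absNorm P)

variable {J : Type*} {P : J → Ideal R}

lemma card_filter_residueChar_eq_le_finrank (hP : ∀ j, Prime (P j)) (hinj : Injective P)
    (S : Finset J) (p : ℕ) : #{j ∈ S | residueChar (P j) = p} ≤ Module.finrank ℤ R := by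
  set F : Finset J := {j ∈ S | residueChar (P j) = p}
  have hF : ∀ j ∈ F, residueChar (P j) = p := fun j hj ↦ (mem_filter.1 hj).2
  rcases F.eq_empty_or_nonempty with hempty | ⟨j₀, hj₀⟩
  · simp [hempty]
  have hp : p.Prime := hF j₀ hj₀ ▸ prime_residueChar (hP j₀)
  have hdvd : ∏ j ∈ F, P j ∣ Ideal.span {(p : R)} := by
    rw [← prod_image (f := fun Q ↦ Q) hinj.injOn]
    refine prod_primes_dvd _ (forall_mem_image.2 fun j _ ↦ hP j)
      (forall_mem_image.2 fun j hj ↦ ?_)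
    rw [Ideal.dvd_span_singleton, ← hF j hj]
    exact Int.absNorm_under_mem (P j)
  have hle : p ^ #F ≤ p ^ Module.finrank ℤ R :=
    calc p ^ #F = ∏ _j ∈ F, p := (prod_const p).symm
      _ ≤ ∏ j ∈ F, Ideal.absNorm (P j) :=
          prod_le_prod' fun j hj ↦ hF j hj ▸ residueChar_le_absNorm (hP j)
      _ = Ideal.absNorm (∏ j ∈ F, P j) := (map_prod _ _ _).symm
      _ ≤ p ^ Module.finrank ℤ R := by
          rw [← Ideal.absNorm_span_natCast]
          refine Nat.le_of_dvd ?_ (map_dvd Ideal.absNorm hdvd)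
          rw [Ideal.absNorm_span_natCast]
          exact pow_pos hp.pos _
  exact (Nat.pow_le_pow_iff_right hp.one_lt).1 hle

lemma sum_absNorm_le_finrank_mul_sum_residueChar (hP : ∀ j, Prime (P j)) (hinj : Injective P)
    (S : Finset J) {g : ℕ → ℝ} (hg₀ : ∀ n, 0 ≤ g n) (hg : AntitoneOn g (Set.Ioi 0)) :
    ∑ j ∈ S, g (Ideal.absNorm (P j)) ≤
      Module.finrank ℤ R * ∑ p ∈ S.image fun j ↦ residueChar (P j), g p := by
  have hpos : ∀ j, 0 < residueChar (P j) := fun j ↦ (prime_residueChar (hP j)).pos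
  have hle : ∀ j, residueChar (P j) ≤ Ideal.absNorm (P j) := fun j ↦ residueChar_le_absNorm (hP j)
  calc ∑ j ∈ S, g (Ideal.absNorm (P j))
      ≤ ∑ j ∈ S, g (residueChar (P j)) :=
        sum_le_sum fun j _ ↦ hg (hpos j) ((hpos j).trans_le (hle j)) (hle j)
    _ = ∑ p ∈ S.image fun j ↦ residueChar (P j), #{j ∈ S | residueChar (P j) = p} • g p :=
        sum_comp g fun j ↦ residueChar (P j)
    _ ≤ ∑ p ∈ S.image fun j ↦ residueChar (P j), Module.finrank ℤ R • g p :=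
        sum_le_sum fun p _ ↦
          nsmul_le_nsmul_left (hg₀ p) (card_filter_residueChar_eq_le_finrank hP hinj S p)
    _ = Module.finrank ℤ R * ∑ p ∈ S.image fun j ↦ residueChar (P j), g p := by
        rw [← smul_sum, nsmul_eq_mul]

lemma sum_inv_absNorm_le (hP : ∀ j, Prime (P j)) (hinj : Injective P) {S : Finset J} {x : ℝ}
    (hx : 2 ≤ x) (hS : ∀ j ∈ S, (Ideal.absNorm (P j) : ℝ) ≤ x) :
    ∑ j ∈ S, (Ideal.absNorm (P j) : ℝ)⁻¹ ≤ Module.finrank ℤ R * (3 * √(Real.log x)) := by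
  refine (sum_absNorm_le_finrank_mul_sum_residueChar hP hinj S (g := fun n ↦ (n : ℝ)⁻¹)
    (fun n ↦ by positivity)
    fun m hm n _ hmn ↦ inv_anti₀ (Nat.cast_pos.2 hm) (Nat.cast_le.2 hmn)).trans ?_
  refine mul_le_mul_of_nonneg_left (sum_inv_le_sqrt_log_of_prime ?_ hx ?_) (Nat.cast_nonneg _)
  · exact forall_mem_image.2 fun j _ ↦ prime_residueChar (hP j)
  · exact forall_mem_image.2 fun j hj ↦
      (Nat.cast_le.2 (residueChar_le_absNorm (hP j))).trans (hS j hj)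

lemma sum_absNorm_rpow_neg_le (hP : ∀ j, Prime (P j)) (hinj : Injective P) (S : Finset J) {σ : ℝ}
    (hσ : 1 < σ) :
    ∑ j ∈ S, (Ideal.absNorm (P j) : ℝ) ^ (-σ) ≤
      Module.finrank ℤ R * ∑' n : ℕ, (n : ℝ) ^ (-σ) := by
  have hsummable : Summable fun n : ℕ ↦ (n : ℝ) ^ (-σ) := Real.summable_nat_rpow.2 (by linarith)
  refine (sum_absNorm_le_finrank_mul_sum_residueChar hP hinj S (g := fun n ↦ (n : ℝ) ^ (-σ))
    (fun n ↦ by positivity) fun m hm n _ hmn ↦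
      Real.rpow_le_rpow_of_nonpos (Nat.cast_pos.2 hm) (Nat.cast_le.2 hmn) (by linarith)).trans ?_
  exact mul_le_mul_of_nonneg_left (hsummable.sum_le_tsum _ fun n _ ↦ by positivity)
    (Nat.cast_nonneg _)

end PrimeIdealSums

section LargePrimes

lemma exp_mul_sqrt_log_le (B : ℝ) {x : ℝ} (hx : 1 ≤ x) :
    Real.exp (B * √(Real.log x)) ≤ Real.exp (B ^ 2 / 2) * x ^ (1 / 2 : ℝ) := by
  rw [Real.rpow_def_of_pos (by linarith), ← Real.exp_add, Real.exp_le_exp]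
  nlinarith [sq_nonneg (√(Real.log x) - B), Real.sq_sqrt (Real.log_nonneg hx)]

lemma rpow_neg_three_half_le {x z : ℝ} (hz : 0 < z) (hx : z ^ 8 ≤ x) :
    x ^ (-(3 / 2) : ℝ) ≤ (z ^ 2)⁻¹ * x ^ (-(5 / 4) : ℝ) := by
  have hx₀ : 0 < x := (pow_pos hz 8).trans_le hx
  calc x ^ (-(3 / 2) : ℝ) = x ^ (-(1 / 4) : ℝ) * x ^ (-(5 / 4) : ℝ) := by
        rw [← Real.rpow_add hx₀]
        norm_num
    _ ≤ (z ^ 8) ^ (-(1 / 4) : ℝ) * x ^ (-(5 / 4) : ℝ) := mul_le_mul_of_nonneg_right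
        (Real.rpow_le_rpow_of_nonpos (by positivity) hx (by norm_num)) (by positivity)
    _ = (z ^ 2)⁻¹ * x ^ (-(5 / 4) : ℝ) := by
        rw [← Real.rpow_natCast, ← Real.rpow_mul hz.le, ← Real.rpow_natCast z 2,
          ← Real.rpow_neg hz.le]
        norm_num

variable {J : Type*} [Fintype J]

lemma newMeasureBound_le {N : J → ℝ} {p : J} {D : ℝ} (hN : 1 ≤ N p)
    (hsum : ∑ q with N q ≤ N p, (N q)⁻¹ ≤ D * √(Real.log (N p))) (s : ℕ) :
    newMeasureBound N s p ≤
      s ^ 2 * (16 * Real.exp ((64 * D) ^ 2 / 2)) * N p ^ (-(3 / 2) : ℝ) := by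
  have hpow : (N p)⁻¹ ^ 2 * N p ^ (1 / 2 : ℝ) = N p ^ (-(3 / 2) : ℝ) := by
    rw [inv_pow, ← Real.rpow_natCast, ← Real.rpow_neg (by linarith),
      ← Real.rpow_add (by linarith)]
    norm_num
  calc newMeasureBound N s p
      ≤ s ^ 2 * (16 * (N p)⁻¹ ^ 2 * Real.exp (64 * D * √(Real.log (N p)))) := by
        unfold newMeasureBound
        rw [mul_assoc 64 D]
        gcongr
    _ ≤ s ^ 2 * (16 * (N p)⁻¹ ^ 2 * (Real.exp ((64 * D) ^ 2 / 2) * N p ^ (1 / 2 : ℝ))) := by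
        gcongr
        exact exp_mul_sqrt_log_le _ hN
    _ = s ^ 2 * (16 * Real.exp ((64 * D) ^ 2 / 2)) * N p ^ (-(3 / 2) : ℝ) := by
        rw [← hpow]
        ring

variable {R : Type*} [CommRing R] [IsDedekindDomain R] [Module.Finite ℤ R] [Module.Free ℤ R]
  {P : J → Ideal R}

lemma sum_newMeasureBound_absNorm_le (hP : ∀ j, Prime (P j)) (hinj : Injective P) (s : ℕ) {z : ℝ}
    (hz : 0 < z) :
    ∑ p with z ^ 8 < Ideal.absNorm (P p),
        newMeasureBound (fun j ↦ (Ideal.absNorm (P j) : ℝ)) s p ≤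
      16 * Real.exp ((64 * (Module.finrank ℤ R * 3)) ^ 2 / 2) *
        (Module.finrank ℤ R * ∑' n : ℕ, (n : ℝ) ^ (-(5 / 4) : ℝ)) * (s ^ 2 / z ^ 2) := by
  set E := Real.exp ((64 * (Module.finrank ℤ R * 3)) ^ 2 / 2)
  have hN : ∀ p, (2 : ℝ) ≤ Ideal.absNorm (P p) := fun p ↦ mod_cast two_le_absNorm (hP p)
  have hbound : ∀ p, newMeasureBound (fun j ↦ (Ideal.absNorm (P j) : ℝ)) s p ≤
      s ^ 2 * (16 * E) * (Ideal.absNorm (P p) : ℝ) ^ (-(3 / 2) : ℝ) := fun p ↦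
    newMeasureBound_le (N := fun j ↦ Ideal.absNorm (P j)) (one_le_two.trans (hN p))
      ((sum_inv_absNorm_le hP hinj (hN p) fun q hq ↦ (mem_filter.1 hq).2).trans_eq
        (mul_assoc _ _ _).symm) s
  calc _ ≤ ∑ p with z ^ 8 < Ideal.absNorm (P p),
          s ^ 2 * (16 * E) * ((z ^ 2)⁻¹ * (Ideal.absNorm (P p) : ℝ) ^ (-(5 / 4) : ℝ)) :=
        sum_le_sum fun p hp ↦ (hbound p).trans (mul_le_mul_of_nonneg_left
          (rpow_neg_three_half_le hz (mem_filter.1 hp).2.le) (by positivity))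
    _ = s ^ 2 * (16 * E) * (z ^ 2)⁻¹ * ∑ p with z ^ 8 < Ideal.absNorm (P p),
          (Ideal.absNorm (P p) : ℝ) ^ (-(5 / 4) : ℝ) := by
        simp only [← mul_assoc, ← mul_sum]
    _ ≤ s ^ 2 * (16 * E) * (z ^ 2)⁻¹ *
          (Module.finrank ℤ R * ∑' n : ℕ, (n : ℝ) ^ (-(5 / 4) : ℝ)) := by
        gcongr
        exact sum_absNorm_rpow_neg_le hP hinj _ (by norm_num)
    _ = _ := by ring

lemma exists_forall_sum_newMeasureBound_le_one_fourth (R : Type*) [CommRing R]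
    [IsDedekindDomain R] [Module.Finite ℤ R] [Module.Free ℤ R] :
    ∃ C : ℝ, 1 ≤ C ∧ ∀ {J : Type*} [Fintype J] {P : J → Ideal R}, (∀ j, Prime (P j)) →
      Injective P → ∀ s : ℕ, ∑ p with (C * (s + 1)) ^ 8 < Ideal.absNorm (P p),
        newMeasureBound (fun j ↦ (Ideal.absNorm (P j) : ℝ)) s p ≤ 1 / 4 := by
  set M := 16 * Real.exp ((64 * (Module.finrank ℤ R * 3)) ^ 2 / 2) *
    (Module.finrank ℤ R * ∑' n : ℕ, (n : ℝ) ^ (-(5 / 4) : ℝ))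
  have hM : 0 ≤ M := mul_nonneg (by positivity)
    (mul_nonneg (by positivity) (tsum_nonneg fun n ↦ by positivity))
  refine ⟨4 * M + 1, by linarith, fun hP hinj s ↦ ?_⟩
  have hs : (s : ℝ) ^ 2 ≤ (s + 1) ^ 2 := by gcongr; linarith
  have hC : 4 * M ≤ (4 * M + 1) ^ 2 := by nlinarith
  calc _ ≤ M * (s ^ 2 / ((4 * M + 1) * (s + 1)) ^ 2) :=
        sum_newMeasureBound_absNorm_le hP hinj s (by positivity)
    _ ≤ 1 / 4 := by
        rw [← mul_div_assoc, div_le_iff₀ (by positivity), mul_pow]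
        linarith [mul_le_mul hC hs (by positivity) (by positivity)]

end LargePrimes

section SmoothModuli

variable {J : Type*} {N : J → ℝ} {σ X : ℝ}

lemma rpow_sub_one_le_three_fourths {x : ℝ} (hx : 2 ≤ x) (hσ : σ ≤ 1 / 2) :
    x ^ (σ - 1) ≤ 3 / 4 :=
  calc x ^ (σ - 1) ≤ x ^ (-(1 / 2) : ℝ) :=
        Real.rpow_le_rpow_of_exponent_le (by linarith) (by linarith)
    _ ≤ 2 ^ (-(1 / 2) : ℝ) := Real.rpow_le_rpow_of_nonpos two_pos hx (by norm_num)
    _ = (√2)⁻¹ := by rw [Real.rpow_neg zero_le_two, Real.sqrt_eq_rpow]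
    _ ≤ (4 / 3)⁻¹ := inv_anti₀ (by norm_num) (Real.le_sqrt_of_sq_le (by norm_num))
    _ = 3 / 4 := by norm_num

lemma inv_le_rpow_neg_mul_rpow_sub_one {x : ℝ} (hX : 0 < X) (hXx : X ≤ x) (hσ : 0 ≤ σ) :
    x⁻¹ ≤ X ^ (-σ) * x ^ (σ - 1) := by
  have hx : 0 < x := hX.trans_le hXx
  calc x⁻¹ = x ^ (-σ) * x ^ (σ - 1) := by
        rw [← Real.rpow_add hx, ← Real.rpow_neg_one]
        ring_nf
    _ ≤ X ^ (-σ) * x ^ (σ - 1) := mul_le_mul_of_nonneg_right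
        (Real.rpow_le_rpow_of_nonpos hX hXx (neg_nonpos.2 hσ)) (by positivity)

variable [Fintype J]

lemma prod_inv_pow_le_rpow_neg_mul_prod (hN : ∀ j, 0 < N j) (hX : 0 < X) (hσ : 0 ≤ σ) {e : J → ℕ}
    (hXe : X ≤ ∏ j, N j ^ e j) {S : Finset J} (hS : ∀ j, e j ≠ 0 → j ∈ S) :
    ∏ j, (N j)⁻¹ ^ e j ≤ X ^ (-σ) * ∏ j ∈ S, (N j ^ (σ - 1)) ^ e j := by
  have hprod : (∏ j, N j ^ e j) ^ (σ - 1) = ∏ j ∈ S, (N j ^ (σ - 1)) ^ e j := by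
    rw [prod_subset (subset_univ S) fun j _ hj ↦ by rw [not_not.1 (mt (hS j) hj), pow_zero],
      ← Real.finsetProd_rpow _ _ fun j _ ↦ pow_nonneg (hN j).le _]
    exact prod_congr rfl fun j _ ↦ (Real.rpow_pow_comm (hN j).le _ _).symm
  simpa only [inv_pow, prod_inv_distrib, hprod] using inv_le_rpow_neg_mul_rpow_sub_one hX hXe hσ

/-- Rankin's trick. -/
lemma sum_prod_inv_pow_le {ι : Type*} [Fintype ι] (hN : ∀ j, 2 ≤ N j) {e : ι → J → ℕ} {s : ℕ}
    (hs : ∀ k, #{l | e l = e k} ≤ s) (hX : 0 < X) (hXe : ∀ k, X ≤ ∏ j, N j ^ e k j) (y : ℝ)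
    (hσ₀ : 0 ≤ σ) (hσ : σ ≤ 1 / 2) :
    ∑ k with ∀ j, e k j ≠ 0 → N j ≤ y, ∏ j, (N j)⁻¹ ^ e k j ≤
      X ^ (-σ) * (s * Real.exp (4 * (y ^ σ * ∑ j with N j ≤ y, (N j)⁻¹))) := by
  have hN₀ : ∀ j, 0 < N j := fun j ↦ two_pos.trans_le (hN j)
  set S : Finset J := {j | N j ≤ y}
  set A : Finset ι := {k | ∀ j, e k j ≠ 0 → N j ≤ y}
  have hA : ∀ k ∈ A, ∀ j, e k j ≠ 0 → j ∈ S := fun k hk j hj ↦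
    mem_filter_univ _ |>.2 ((mem_filter.1 hk).2 j hj)
  have hfiber : ∀ k ∈ A, ∀ l ∈ A, (∀ j ∈ S, e l j = e k j) → e l = e k :=
    fun k hk l hl heq ↦ funext fun j ↦ by
      by_cases hj : j ∈ S
      · exact heq j hj
      · rw [not_not.1 (mt (hA l hl j) hj), not_not.1 (mt (hA k hk j) hj)]
  have hterm : ∀ j ∈ S, N j ^ (σ - 1) ≤ y ^ σ * (N j)⁻¹ := fun j hj ↦ by
    rw [Real.rpow_sub_one (hN₀ j).ne', div_eq_mul_inv]
    exact mul_le_mul_of_nonneg_right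
      (Real.rpow_le_rpow (hN₀ j).le (mem_filter.1 hj).2 hσ₀) (inv_nonneg.2 (hN₀ j).le)
  calc ∑ k ∈ A, ∏ j, (N j)⁻¹ ^ e k j
      ≤ ∑ k ∈ A, X ^ (-σ) * ∏ j ∈ S, (N j ^ (σ - 1)) ^ e k j := sum_le_sum fun k hk ↦
        prod_inv_pow_le_rpow_neg_mul_prod hN₀ hX hσ₀ (hXe k) (hA k hk)
    _ = X ^ (-σ) * ∑ k ∈ A, ∏ j ∈ S, (N j ^ (σ - 1)) ^ e k j := (mul_sum ..).symm
    _ ≤ X ^ (-σ) * (s * Real.exp (4 * ∑ j ∈ S, N j ^ (σ - 1))) := by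
        gcongr
        exact sum_prod_pow_le A (fun j _ ↦ rpow_sub_one_le_three_fourths (hN j) hσ)
          (fun j ↦ Real.rpow_nonneg (hN₀ j).le _) fun k hk ↦ (card_le_card fun l hl ↦ by
            simp only [mem_filter, mem_univ, true_and] at hl ⊢
            exact hfiber k hk l hl.1 hl.2).trans (hs k)
    _ ≤ X ^ (-σ) * (s * Real.exp (4 * (y ^ σ * ∑ j ∈ S, (N j)⁻¹))) := by
        rw [mul_sum _ _ (y ^ σ)]
        gcongr with j hj
        exact hterm j hj

lemma sum_prod_inv_absNorm_pow_le {R ι : Type*} [CommRing R] [IsDedekindDomain R]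
    [Module.Finite ℤ R] [Module.Free ℤ R] [Fintype ι] {P : J → Ideal R} (hP : ∀ j, Prime (P j))
    (hinj : Injective P) {e : ι → J → ℕ} {s : ℕ} (hs : ∀ k, #{l | e l = e k} ≤ s) (hX : 0 < X)
    (hXe : ∀ k, X ≤ Ideal.absNorm (∏ j, P j ^ e k j)) {y : ℝ} (hy : 2 ≤ y) (hσ₀ : 0 ≤ σ)
    (hσ : σ ≤ 1 / 2) :
    ∑ k with ∀ j, e k j ≠ 0 → (Ideal.absNorm (P j) : ℝ) ≤ y,
        ∏ j, (Ideal.absNorm (P j) : ℝ)⁻¹ ^ e k j ≤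
      X ^ (-σ) * (s * Real.exp (4 * (y ^ σ * (Module.finrank ℤ R * (3 * √(Real.log y)))))) := by
  have hXe' : ∀ k, X ≤ ∏ j, (Ideal.absNorm (P j) : ℝ) ^ e k j := fun k ↦ by
    simpa only [map_prod, map_pow, Nat.cast_prod, Nat.cast_pow] using hXe k
  refine (sum_prod_inv_pow_le (fun j ↦ mod_cast two_le_absNorm (hP j)) hs hX hXe' y hσ₀ hσ).trans ?_
  gcongr
  exact sum_inv_absNorm_le hP hinj hy fun j hj ↦ (mem_filter.1 hj).2

end SmoothModuli

section Parameters

variable {D G L u v x : ℝ}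

lemma sqrt_mul_sqrt_le (hG : 1 ≤ G) (hv : 0 ≤ v) (hvu : v ≤ 2 * u) (hLG : L ≤ G * u) :
    √v * √L ≤ 2 * G * u := by
  have hu : 0 ≤ u := by linarith
  rw [← Real.sqrt_mul hv]
  refine Real.sqrt_le_iff.2 ⟨by positivity, ?_⟩
  calc v * L ≤ v * (G * u) := mul_le_mul_of_nonneg_left hLG hv
    _ ≤ 2 * u * (G * u) := mul_le_mul_of_nonneg_right hvu (by positivity)
    _ ≤ (2 * G * u) ^ 2 := by nlinarith [mul_nonneg (sq_nonneg u) (by linarith : 0 ≤ G)]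

/-- The choice `σ = log v / (2 * L)` turns `exp (L * σ)` into `√v`. -/
lemma exp_rpow_neg_mul_le_one_fourth (hD : 0 ≤ D) (hG : 1 ≤ G) (hx : 0 ≤ x)
    (hxu : x ≤ Real.exp u) (hu : Real.log 2 ≤ u) (hv : 1 < v) (hvu : v ≤ 2 * u) (hL : 0 < L)
    (hLG : L ≤ G * u) :
    Real.exp (2 * G * (3 + 8 * D * G) * u ^ 2 / Real.log v) ^ (-(Real.log v / (2 * L))) *
      (x * Real.exp (4 * (√v * (D * √L)))) ≤ 1 / 4 := by
  have hlogv : 0 < Real.log v := Real.log_pos hv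
  have hsqrt : 4 * (√v * (D * √L)) ≤ 8 * D * G * u := by
    linarith [mul_le_mul_of_nonneg_left (sqrt_mul_sqrt_le hG (by linarith) hvu hLG) hD]
  have hexponent : 2 * G * (3 + 8 * D * G) * u ^ 2 / Real.log v * -(Real.log v / (2 * L)) ≤
      -((3 + 8 * D * G) * u) := by
    have heq : 2 * G * (3 + 8 * D * G) * u ^ 2 / Real.log v * -(Real.log v / (2 * L)) =
        -((3 + 8 * D * G) * u * (G * u / L)) := by field_simp
    rw [heq, neg_le_neg_iff]
    exact le_mul_of_one_le_right (mul_nonneg (by positivity) (by linarith)) ((one_le_div₀ hL).2 hLG)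
  rw [← Real.exp_mul]
  calc _ ≤ Real.exp (-((3 + 8 * D * G) * u)) * (Real.exp u * Real.exp (8 * D * G * u)) := by
        gcongr
    _ = Real.exp (-(2 * u)) := by
        rw [← Real.exp_add, ← Real.exp_add]
        ring_nf
    _ ≤ Real.exp (-(2 * Real.log 2)) := by gcongr
    _ = 1 / 4 := by
        rw [Real.exp_neg, two_mul, Real.exp_add, Real.exp_log two_pos]
        norm_num

lemma one_lt_log_add_two (hx : 1 ≤ x) : 1 < Real.log (x + 2) := by
  rw [Real.lt_log_iff_exp_lt (by linarith)]
  linarith [Real.exp_one_lt_three]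

lemma log_add_two_le (hx : 1 ≤ x) : Real.log (x + 2) ≤ 2 * Real.log (x + 1) := by
  rw [← Nat.cast_two, ← Real.log_pow]
  exact Real.log_le_log (by push_cast; linarith) (by push_cast; nlinarith)

lemma two_le_mul_add_one_pow {C : ℝ} (hC : 1 ≤ C) {s : ℕ} (hs : 1 ≤ s) :
    2 ≤ (C * (s + 1)) ^ 8 := by
  have hs₁ : (1 : ℝ) ≤ s := Nat.one_le_cast.2 hs
  have htwo : 2 ≤ C * (s + 1) := by nlinarith
  exact htwo.trans (le_self_pow₀ (by linarith) (by norm_num))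

lemma exists_parameters {C : ℝ} (hC : 1 ≤ C) (hD : 0 ≤ D) :
    ∃ c : ℝ, 0 < c ∧ ∀ s : ℕ, 1 ≤ s → ∃ σ : ℝ, 0 ≤ σ ∧ σ ≤ 1 / 2 ∧
      Real.exp (c * Real.log (s + 1) ^ 2 / Real.log (Real.log (s + 2))) ^ (-σ) *
        (s * Real.exp (4 * (((C * (s + 1)) ^ 8) ^ σ *
          (D * √(Real.log ((C * (s + 1)) ^ 8)))))) ≤ 1 / 4 := by
  have hlogC : 0 ≤ Real.log C := Real.log_nonneg hC
  set G := 8 * (2 * Real.log C + 1)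
  have hG : 1 ≤ G := by linarith
  refine ⟨2 * G * (3 + 8 * D * G), by positivity, fun s hs ↦ ?_⟩
  have hs₁ : (1 : ℝ) ≤ s := Nat.one_le_cast.2 hs
  have hu : Real.log 2 ≤ Real.log (s + 1) := Real.log_le_log two_pos (by linarith)
  have hv := one_lt_log_add_two hs₁
  have hvu := log_add_two_le hs₁
  have hlogv :=
    (Real.log_le_sub_one_of_pos (zero_lt_one.trans hv)).trans (sub_le_self _ zero_le_one)
  set y : ℝ := (C * (s + 1)) ^ 8
  have hy : 0 < y := by positivity
  have hL : Real.log y = 8 * (Real.log C + Real.log (s + 1)) := by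
    rw [Real.log_pow, Real.log_mul (by linarith) (by linarith)]
    norm_num
  have hL₀ : 0 < Real.log y := by linarith [Real.log_pos one_lt_two]
  have hLG : Real.log y ≤ G * Real.log (s + 1) := by
    nlinarith [Real.log_two_gt_d9]
  refine ⟨Real.log (Real.log (s + 2)) / (2 * Real.log y),
    div_nonneg (Real.log_nonneg hv.le) (by linarith), ?_, ?_⟩
  · rw [div_le_div_iff₀ (by linarith) two_pos]
    linarith
  · have hyσ : y ^ (Real.log (Real.log (s + 2)) / (2 * Real.log y)) = √(Real.log (s + 2)) := by
      rw [Real.rpow_def_of_pos hy, Real.sqrt_eq_rpow, Real.rpow_def_of_pos (by linarith)]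
      congr 1
      field_simp
    rw [hyσ]
    refine exp_rpow_neg_mul_le_one_fourth hD hG (by linarith) ?_ hu hv hvu hL₀ hLG
    rw [Real.exp_log (by linarith)]
    linarith

end Parameters

section Factorization

lemma exists_prod_prime_pow_eq {R ι : Type*} [CommRing R] [IsDedekindDomain R] [Finite ι]
    {I : ι → Ideal R} (hI : ∀ i, I i ≠ ⊥) :
    ∃ (T : Finset (Ideal R)) (e : ι → T → ℕ),
      (∀ j : T, Prime (j : Ideal R)) ∧ ∀ i, ∏ j : T, (j : Ideal R) ^ e i j = I i := by
  cases nonempty_fintype ι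
  set factors : ι → Multiset (Ideal R) := fun i ↦ UniqueFactorizationMonoid.normalizedFactors (I i)
  refine ⟨univ.biUnion fun i ↦ (factors i).toFinset, fun i j ↦ (factors i).count (j : Ideal R),
    fun j ↦ ?_, fun i ↦ ?_⟩
  · obtain ⟨i, -, hi⟩ := mem_biUnion.1 j.2
    exact UniqueFactorizationMonoid.prime_of_normalized_factor _ (Multiset.mem_toFinset.1 hi)
  · rw [prod_coe_sort _ fun Q ↦ Q ^ (factors i).count Q, ← prod_multiset_count_of_subset]
    · exact Ideal.prod_normalizedFactors_eq_self (hI i)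
    · exact subset_biUnion_of_mem (fun i ↦ (factors i).toFinset) (mem_univ i)

end Factorization

end MinimumModulus

open MinimumModulus Finset in
theorem minimum_modulus_number_field_general (R : Type*) [CommRing R] [IsDedekindDomain R]
    [Module.Finite ℤ R] [Module.Free ℤ R] :
    ∃ c : ℝ, 0 < c ∧ ∀ {ι : Type*} [Fintype ι] (a : ι → R) (I : ι → Ideal R) (s : ℕ),
      (∀ i, I i ≠ ⊥) → (∀ x, ∃ i, x - a i ∈ I i) → (∀ I₀, #{i | I i = I₀} ≤ s) →
        ∃ i, (Ideal.absNorm (I i) : ℝ) ≤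
          Real.exp (c * Real.log (s + 1) ^ 2 / Real.log (Real.log (s + 2))) := by
  obtain ⟨C, hC, hlarge⟩ := exists_forall_sum_newMeasureBound_le_one_fourth R
  obtain ⟨c, hc, hparam⟩ := exists_parameters hC (D := Module.finrank ℤ R * 3) (by positivity)
  refine ⟨c, hc, fun a I s hI hcov hs ↦ ?_⟩
  by_contra! hX
  obtain ⟨T, e, hT, he⟩ := exists_prod_prime_pow_eq hI
  obtain ⟨i, -⟩ := hcov 0
  have hs₁ : 1 ≤ s := (card_pos.2 ⟨i, by simp⟩).trans_le (hs (I i))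
  obtain ⟨σ, hσ₀, hσ, hparam⟩ := hparam s hs₁
  have hfiber : ∀ k, #{l | e l = e k} ≤ s := fun k ↦ (card_le_card fun l hl ↦ by
    simp only [mem_filter, mem_univ, true_and] at hl ⊢
    rw [← he l, ← he k, hl]).trans (hs (I k))
  have hsmooth := sum_prod_inv_absNorm_pow_le hT Subtype.val_injective hfiber (Real.exp_pos _)
    (fun k ↦ (he k).symm ▸ (hX k).le) (two_le_mul_add_one_pow hC hs₁) hσ₀ hσ
  rw [mul_assoc] at hparam
  linarith [one_le_sum_inv_absNorm_add_sum_newMeasureBound hT Subtype.val_injective a e hfiber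
    (by simpa only [he] using hcov) ((C * (s + 1)) ^ 8), hlarge hT Subtype.val_injective s]

/-- Erdős' minimum modulus problem in number fields. -/
theorem minimum_modulus_number_field (K : Type*) [Field K] [NumberField K] :
    ∃ c : ℝ, 0 < c ∧
      ∀ (n : ℕ) (hn : 0 < n) (a : Fin n → 𝓞 K) (Idl : Fin n → Ideal (𝓞 K)) (s : ℕ),
        (∀ i : Fin n, Distinguishable (Idl i)) →
        (∀ x : 𝓞 K, ∃ i : Fin n, x - a i ∈ Idl i) →
        (∀ I₀ : Ideal (𝓞 K), (Finset.univ.filter fun i : Fin n => Idl i = I₀).card ≤ s) →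
        (∃ I₀ : Ideal (𝓞 K), (Finset.univ.filter fun i : Fin n => Idl i = I₀).card = s) →
        ∃ i : Fin n, (Ideal.absNorm (Idl i) : ℝ) ≤
          Real.exp (c * (Real.log (s + 1)) ^ 2 / Real.log (Real.log (s + 2))) := by
  obtain ⟨c, hc, h⟩ := minimum_modulus_number_field_general (𝓞 K)
  exact ⟨c, hc, fun _ _ a Idl s hdist hcov hs _ ↦ h a Idl s (fun i ↦ (hdist i).1) hcov hs⟩
end

section
/- There exists an absolute constant c > 0 such that for every covering system of ℤ of multiplicity s, the smallest modulus is at most exp(c · log²(s+1) / log log(s+2)). -/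
open scoped Classical

/-!
The distortion method for covering systems, with a uniform initial measure on the small primes.
Work on `ZMod N`, where `N` is a common multiple of the moduli, suppose that all moduli exceed `M`,
and treat the prime factors of the moduli in increasing order. After the primes less than `k` there
is a probability density depending only on `k`-smooth moduli, which gives each class modulo a
`k`-smooth `d` mass at most `τ(d) / d`, and which gives little mass to the progressions with
`k`-smooth modulus.

*Small primes.* Up to `y`, a large power of `s + 2`, the density is uniform and the union bound is
`s * ∑ 1 / l` over `y`-smooth `l ≥ M`. Rankin's trick bounds the sum by
`M ^ (-ε) * exp (16 log y + 8 y ^ ε)`, via an Euler product and a Chebyshev-type bound on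
`∑ log p / p`. With `y ^ ε = log y` the union bound is less than `1 / 2` as soon as `log M` is at
least `30 log² y / log log y`.

*Large primes.* At a prime `p ≥ y`, let `α` be the proportion, within a class modulo the smaller
primes, of points covered by progressions whose modulus has largest prime factor `p`. Distort the
density: where `α < 1 / 2`, remove all the newly covered mass, elsewhere reduce it as much as a
factor bounded by `2` can. The total mass of each class is preserved, the factor `2` is absorbed by
`τ(d) / d`, and the newly covered mass is at most the second moment of `α`. Two progressions meet in
a class modulo the lcm of their moduli, so the second moment is at most
`4 s² / p² * ∑ τ(l)³ / l` over `p`-smooth `l`, hence `O(s² p ^ (-3/2))`. The total loss over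
`p ≥ y` is `O(s² / √y)`, at most `1 / 2`, so the covered mass never reaches `1`.
-/

namespace CoveringSystems

open Finset Real
open scoped Nat BigOperators

/-! ### Sums over primes -/

lemma prod_primesBelow_pow_div_dvd_factorial (k : ℕ) :
    ∏ p ∈ k.primesBelow, p ^ (k / p) ∣ k ! := by
  refine Finset.prod_dvd_of_isRelPrime (fun p hp q hq hpq => ?_) fun p hp => ?_
  · exact Nat.coprime_iff_isRelPrime.mp <| Nat.Coprime.pow _ _ <|
      (Nat.coprime_primes (Nat.prime_of_mem_primesBelow hp)
        (Nat.prime_of_mem_primesBelow hq)).mpr hpq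
  · have := Fact.mk (Nat.prime_of_mem_primesBelow hp)
    refine dvd_trans ?_ (Nat.factorial_dvd_factorial (Nat.mul_div_le k p))
    rw [padicValNat_dvd_iff_le (Nat.factorial_ne_zero _), padicValNat_factorial_mul]
    exact Nat.le_add_left _ _

lemma sum_primesBelow_div_mul_log_le (k : ℕ) :
    ∑ p ∈ k.primesBelow, ((k / p : ℕ) : ℝ) * log p ≤ k * log k := by
  have hpos : ∀ p ∈ k.primesBelow, 0 < p ^ (k / p) := fun p hp =>
    pow_pos (Nat.prime_of_mem_primesBelow hp).pos _
  have hle : ∏ p ∈ k.primesBelow, p ^ (k / p) ≤ k ^ k :=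
    (Nat.le_of_dvd k.factorial_pos (prod_primesBelow_pow_div_dvd_factorial k)).trans
      k.factorial_le_pow
  calc ∑ p ∈ k.primesBelow, ((k / p : ℕ) : ℝ) * log p
      = log (∏ p ∈ k.primesBelow, p ^ (k / p) : ℕ) := by
        rw [Nat.cast_prod, log_prod fun p hp => Nat.cast_ne_zero.mpr (hpos p hp).ne']
        simp
    _ ≤ log (k ^ k : ℕ) :=
        log_le_log (Nat.cast_pos.mpr (prod_pos hpos)) (Nat.cast_le.mpr hle)
    _ = k * log k := by simp

lemma sum_primesBelow_log_div_le (k : ℕ) :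
    ∑ p ∈ k.primesBelow, log p / p ≤ 2 * log k := by
  rcases k.eq_zero_or_pos with rfl | hk
  · simp
  have hterm : ∀ p ∈ k.primesBelow, k * (log p / p) ≤ 2 * (((k / p : ℕ) : ℝ) * log p) := by
    intro p hp
    have hp0 : 0 < p := (Nat.prime_of_mem_primesBelow hp).pos
    have hpk : p ≤ k := (Nat.lt_of_mem_primesBelow hp).le
    -- `⌊x⌋ ≥ x / 2` for `x ≥ 1`
    have hfloor : (k : ℝ) / p ≤ 2 * (k / p : ℕ) := by
      rw [div_le_iff₀ (by positivity)]
      have hdiv := Nat.div_pos hpk hp0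
      have hmod := Nat.lt_mul_div_succ k hp0
      exact_mod_cast show k ≤ 2 * (k / p) * p by nlinarith
    calc k * (log p / p) = k / p * log p := by ring
      _ ≤ 2 * (k / p : ℕ) * log p := by gcongr
      _ = 2 * (((k / p : ℕ) : ℝ) * log p) := by ring
  have hsum := sum_le_sum hterm
  rw [← mul_sum, ← mul_sum] at hsum
  have hk0 : (0 : ℝ) < k := Nat.cast_pos.mpr hk
  refine le_of_mul_le_mul_left ?_ hk0
  linarith [sum_primesBelow_div_mul_log_le k]

/-- The primes below `exp L` contribute at most `1` each, the others at most `log p / (L p)`. -/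
lemma sum_primesBelow_one_div_le {L : ℝ} (hL : 0 < L) (k : ℕ) :
    ∑ p ∈ k.primesBelow, 1 / (p : ℝ) ≤ ⌈exp L⌉₊ + 2 / L * log k := by
  have hterm : ∀ p ∈ k.primesBelow,
      1 / (p : ℝ) ≤ (if p < ⌈exp L⌉₊ then 1 else 0) + 1 / L * (log p / p) := by
    intro p hp
    have hp1 : (1 : ℝ) ≤ p := Nat.one_le_cast.mpr (Nat.prime_of_mem_primesBelow hp).one_le
    split_ifs with hlt
    · have h1 : 1 / (p : ℝ) ≤ 1 := (div_le_one (by positivity)).mpr hp1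
      have h2 : 0 ≤ 1 / L * (log p / p) := by positivity
      linarith
    · have hlog : L ≤ log p :=
        (le_log_iff_exp_le (by positivity)).mpr (Nat.ceil_le.mp (not_lt.mp hlt))
      rw [zero_add]
      calc 1 / (p : ℝ) = 1 / L * (L / p) := by field_simp
        _ ≤ 1 / L * (log p / p) := by gcongr
  have hsmall : ∑ p ∈ k.primesBelow, (if p < ⌈exp L⌉₊ then (1 : ℝ) else 0) ≤ ⌈exp L⌉₊ := by
    rw [sum_boole]
    have hsub : {p ∈ k.primesBelow | p < ⌈exp L⌉₊} ⊆ range ⌈exp L⌉₊ := fun p hp =>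
      mem_range.mpr (mem_filter.mp hp).2
    exact_mod_cast (card_le_card hsub).trans_eq (card_range _)
  calc ∑ p ∈ k.primesBelow, 1 / (p : ℝ)
      ≤ ∑ p ∈ k.primesBelow, (if p < ⌈exp L⌉₊ then (1 : ℝ) else 0) +
          1 / L * ∑ p ∈ k.primesBelow, log p / p := by
        rw [mul_sum, ← sum_add_distrib]
        exact sum_le_sum hterm
    _ ≤ ⌈exp L⌉₊ + 1 / L * (2 * log k) := by
        gcongr
        exact sum_primesBelow_log_div_le k
    _ = ⌈exp L⌉₊ + 2 / L * log k := by ring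

/-- Convexity of `x ↦ x ^ ε` in `log x`, between the values at `1` and at `y`. -/
lemma rpow_le_one_add_log_div_log_mul {x y : ℝ} (hx : 1 ≤ x) (hxy : x ≤ y) (hy : 1 < y) (ε : ℝ) :
    x ^ ε ≤ 1 + log x / log y * y ^ ε := by
  have hlog : 0 < log y := log_pos hy
  have hθ : 0 ≤ log x / log y := div_nonneg (log_nonneg hx) hlog.le
  have hθ' : log x / log y ≤ 1 := (div_le_one hlog).mpr (log_le_log (by linarith) hxy)
  have hconv := convexOn_exp.2 (Set.mem_univ 0) (Set.mem_univ (log y * ε))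
    (sub_nonneg.mpr hθ') hθ (sub_add_cancel _ _)
  have harg : log x / log y * (log y * ε) = log x * ε := by field_simp
  simp only [smul_eq_mul, mul_zero, zero_add, exp_zero, mul_one, harg] at hconv
  rw [rpow_def_of_pos (by linarith), rpow_def_of_pos (by linarith)]
  linarith

lemma sum_primesBelow_rpow_sub_one_le {k : ℕ} (hk : 2 ≤ k) (ε : ℝ) :
    ∑ p ∈ k.primesBelow, (p : ℝ) ^ (ε - 1) ≤ 4 * log k + 2 * (k : ℝ) ^ ε := by
  have hk1 : (1 : ℝ) < k := by exact_mod_cast hk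
  have hlog : 0 < log k := log_pos hk1
  have hterm : ∀ p ∈ k.primesBelow,
      (p : ℝ) ^ (ε - 1) ≤ (2 + (k : ℝ) ^ ε / log k) * (log p / p) := by
    intro p hp
    have hp2 : (2 : ℝ) ≤ p := Nat.ofNat_le_cast.mpr (Nat.prime_of_mem_primesBelow hp).two_le
    have hpk : (p : ℝ) ≤ k := Nat.cast_le.mpr (Nat.lt_of_mem_primesBelow hp).le
    have hlogp : 1 / 2 ≤ log p := by
      linarith [log_le_log (by norm_num) hp2, log_two_gt_d9]
    have hconv := rpow_le_one_add_log_div_log_mul (by linarith) hpk hk1 ε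
    rw [rpow_sub_one (by positivity), ← mul_div_assoc]
    gcongr
    calc (p : ℝ) ^ ε ≤ 2 * log p + log p / log k * (k : ℝ) ^ ε := by linarith
      _ = (2 + (k : ℝ) ^ ε / log k) * log p := by ring
  calc ∑ p ∈ k.primesBelow, (p : ℝ) ^ (ε - 1)
      ≤ (2 + (k : ℝ) ^ ε / log k) * ∑ p ∈ k.primesBelow, log p / p := by
        rw [mul_sum]
        exact sum_le_sum hterm
    _ ≤ (2 + (k : ℝ) ^ ε / log k) * (2 * log k) := by
        gcongr
        exact sum_primesBelow_log_div_le k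
    _ = 4 * log k + 2 * (k : ℝ) ^ ε := by field_simp; ring

/-! ### Sums over smooth numbers -/

/-- Euler product bound; `g p` bounds the contribution of the positive powers of `p`. -/
lemma sum_smoothNumbers_le_exp_sum_primesBelow {f g : ℕ → ℝ} (hf : ∀ n, 0 ≤ f n) (hf1 : f 1 = 1)
    (hmul : ∀ {m n}, Nat.Coprime m n → f (m * n) = f m * f n)
    (hsum : ∀ {p : ℕ}, p.Prime → Summable fun n : ℕ => f (p ^ (n + 1)))
    (hg : ∀ {p : ℕ}, p.Prime → ∑' n : ℕ, f (p ^ (n + 1)) ≤ g p)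
    {k : ℕ} {D : Finset ℕ} (hD : ∀ l ∈ D, l ∈ k.smoothNumbers) :
    ∑ l ∈ D, f l ≤ exp (∑ p ∈ k.primesBelow, g p) := by
  have hsum₀ : ∀ {p : ℕ}, p.Prime → Summable fun n : ℕ => f (p ^ n) := fun hp =>
    (summable_nat_add_iff 1).mp (hsum hp)
  obtain ⟨-, heuler⟩ := EulerProduct.summable_and_hasSum_smoothNumbers_prod_primesBelow_tsum
    hf1 hmul (fun hp => (hsum₀ hp).norm) k
  calc ∑ l ∈ D, f l ≤ ∏ p ∈ k.primesBelow, ∑' n : ℕ, f (p ^ n) := by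
        have hle := sum_le_hasSum (D.subtype (· ∈ k.smoothNumbers)) (fun i _ => hf i) heuler
        rwa [sum_subtype_of_mem (f := f) hD] at hle
    _ ≤ ∏ p ∈ k.primesBelow, exp (g p) := by
        refine prod_le_prod (fun p _ => tsum_nonneg fun n => hf _) fun p hp => ?_
        have hp' := Nat.prime_of_mem_primesBelow hp
        rw [(hsum₀ hp').tsum_eq_zero_add, pow_zero, hf1]
        linarith [hg hp', add_one_le_exp (g p)]
    _ = exp (∑ p ∈ k.primesBelow, g p) := (exp_sum _ _).symm

lemma exists_tsum_card_divisors_prime_pow_le : ∃ C : ℝ, 0 < C ∧ ∀ {p : ℕ}, p.Prime →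
    (Summable fun n : ℕ => (#(p ^ (n + 1)).divisors : ℝ) ^ 3 / (p ^ (n + 1) : ℕ)) ∧
      ∑' n : ℕ, (#(p ^ (n + 1)).divisors : ℝ) ^ 3 / (p ^ (n + 1) : ℕ) ≤ C * (1 / p) := by
  set g : ℕ → ℝ := fun n => ((n : ℝ) + 2) ^ 3 * (1 / 2) ^ n with hg
  have hgsum : Summable g := by
    have hgeom := summable_pow_mul_geometric_of_norm_lt_one (R := ℝ) 3 (r := 1 / 2) (by norm_num)
    refine (((summable_nat_add_iff 2).mpr hgeom).mul_left 4).congr fun n => ?_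
    simp only [hg]
    push_cast
    ring
  have hgpos : 0 < ∑' n, g n :=
    hgsum.tsum_pos (fun n => by positivity) 0 (by simp [hg])
  refine ⟨∑' n, g n, hgpos, fun {p} hp => ?_⟩
  have hterm (n : ℕ) :
      (#(p ^ (n + 1)).divisors : ℝ) ^ 3 / (p ^ (n + 1) : ℕ) ≤ g n * (1 / p) := by
    have hp2 : (2 : ℝ) ≤ p := Nat.ofNat_le_cast.mpr hp.two_le
    rw [Nat.divisors_prime_pow hp, card_map, card_range]
    push_cast
    calc ((n : ℝ) + 1 + 1) ^ 3 / (p : ℝ) ^ (n + 1)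
        = ((n : ℝ) + 2) ^ 3 * (1 / p) ^ n * (1 / p) := by
          rw [one_div_pow, pow_succ]
          field_simp
          ring
      _ ≤ ((n : ℝ) + 2) ^ 3 * (1 / 2) ^ n * (1 / p) := by gcongr
  have hsum := Summable.of_nonneg_of_le (fun n => by positivity) hterm (hgsum.mul_right _)
  refine ⟨hsum, ?_⟩
  rw [← tsum_mul_right]
  exact hsum.tsum_le_tsum hterm (hgsum.mul_right _)

/-- The true order is a power of `log k`; any power of `k` below `1` would make the total loss
over the primes converge. -/
lemma exists_sum_smoothNumbers_card_divisors_le :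
    ∃ C : ℝ, 0 < C ∧ ∀ {k : ℕ}, 1 ≤ k → ∀ {D : Finset ℕ}, (∀ l ∈ D, l ∈ k.smoothNumbers) →
      ∑ l ∈ D, (#l.divisors : ℝ) ^ 3 / l ≤ C * √k := by
  obtain ⟨B, hB, hprime⟩ := exists_tsum_card_divisors_prime_pow_le
  refine ⟨exp (B * ⌈exp (4 * B)⌉₊), exp_pos _, fun {k} hk D hD => ?_⟩
  have hk0 : (0 : ℝ) < k := Nat.cast_pos.mpr hk
  calc ∑ l ∈ D, (#l.divisors : ℝ) ^ 3 / l
      ≤ exp (∑ p ∈ k.primesBelow, B * (1 / p)) :=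
        sum_smoothNumbers_le_exp_sum_primesBelow (f := fun l => (#l.divisors : ℝ) ^ 3 / l)
          (fun n => by positivity) (by simp)
          (fun h => by
            rw [h.card_divisors_mul]
            push_cast
            rw [mul_pow, mul_div_mul_comm])
          (fun hp => (hprime hp).1) (fun hp => (hprime hp).2) hD
    _ ≤ exp (B * (⌈exp (4 * B)⌉₊ + 2 / (4 * B) * log k)) := by
        rw [← mul_sum]
        gcongr
        exact sum_primesBelow_one_div_le (by positivity) k
    _ = exp (B * ⌈exp (4 * B)⌉₊ + log k / 2) := by
        congr 1
        field_simp
        ring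
    _ = exp (B * ⌈exp (4 * B)⌉₊) * √k := by rw [exp_add, exp_half, exp_log hk0]

lemma prime_rpow_sub_one_le {p : ℕ} (hp : p.Prime) {ε : ℝ} (hε : ε ≤ 1 / 2) :
    (p : ℝ) ^ (ε - 1) ≤ 3 / 4 := by
  calc (p : ℝ) ^ (ε - 1) ≤ 2 ^ (ε - 1) :=
        rpow_le_rpow_of_nonpos (by norm_num) (Nat.ofNat_le_cast.mpr hp.two_le) (by linarith)
    _ ≤ 2 ^ (-(1 / 2) : ℝ) := rpow_le_rpow_of_exponent_le (by norm_num) (by linarith)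
    _ = (√2)⁻¹ := by rw [rpow_neg (by norm_num), sqrt_eq_rpow]
    _ ≤ 3 / 4 := by
        rw [inv_le_comm₀ (by positivity) (by norm_num)]
        exact le_sqrt_of_sq_le (by norm_num)

lemma sum_smoothNumbers_rpow_sub_one_le {k : ℕ} (hk : 2 ≤ k) {ε : ℝ} (hε : ε ≤ 1 / 2)
    {D : Finset ℕ} (hD : ∀ l ∈ D, l ∈ k.smoothNumbers) :
    ∑ l ∈ D, (l : ℝ) ^ (ε - 1) ≤ exp (16 * log k + 8 * (k : ℝ) ^ ε) := by
  have hgeom {p : ℕ} (hp : p.Prime) : HasSum (fun n : ℕ => ((p ^ (n + 1) : ℕ) : ℝ) ^ (ε - 1))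
      ((p : ℝ) ^ (ε - 1) * (1 - (p : ℝ) ^ (ε - 1))⁻¹) := by
    have hpow (n : ℕ) : ((p ^ (n + 1) : ℕ) : ℝ) ^ (ε - 1) =
        (p : ℝ) ^ (ε - 1) * ((p : ℝ) ^ (ε - 1)) ^ n := by
      rw [Nat.cast_pow, ← rpow_pow_comm (by positivity), pow_succ']
    simp_rw [hpow]
    exact (hasSum_geometric_of_lt_one (by positivity)
      (by linarith [prime_rpow_sub_one_le hp hε])).mul_left _
  have hratio {p : ℕ} (hp : p.Prime) : (1 - (p : ℝ) ^ (ε - 1))⁻¹ ≤ 4 := by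
    have hle := prime_rpow_sub_one_le hp hε
    rw [inv_le_comm₀ (by linarith) (by norm_num)]
    linarith
  calc ∑ l ∈ D, (l : ℝ) ^ (ε - 1)
      ≤ exp (∑ p ∈ k.primesBelow, 4 * (p : ℝ) ^ (ε - 1)) :=
        sum_smoothNumbers_le_exp_sum_primesBelow (f := fun l => (l : ℝ) ^ (ε - 1))
          (fun n => by positivity) (by simp)
          (fun _ => by rw [Nat.cast_mul, mul_rpow (by positivity) (by positivity)])
          (fun hp => (hgeom hp).summable)
          (fun hp => by
            rw [(hgeom hp).tsum_eq, mul_comm]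
            gcongr
            exact hratio hp) hD
    _ ≤ exp (16 * log k + 8 * (k : ℝ) ^ ε) := by
        rw [← mul_sum]
        gcongr
        linarith [sum_primesBelow_rpow_sub_one_le hk ε]

/-- Rankin's trick. -/
lemma sum_smoothNumbers_one_div_le {k : ℕ} (hk : 2 ≤ k) {ε M : ℝ} (hε₀ : 0 ≤ ε) (hε : ε ≤ 1 / 2)
    (hM : 0 < M) {D : Finset ℕ} (hD : ∀ l ∈ D, l ∈ k.smoothNumbers) (hDM : ∀ l ∈ D, M ≤ l) :
    ∑ l ∈ D, 1 / (l : ℝ) ≤ M ^ (-ε) * exp (16 * log k + 8 * (k : ℝ) ^ ε) := by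
  have hterm : ∀ l ∈ D, 1 / (l : ℝ) ≤ M ^ (-ε) * (l : ℝ) ^ (ε - 1) := by
    intro l hl
    have hl0 : (0 : ℝ) < l := hM.trans_le (hDM l hl)
    rw [rpow_neg hM.le, rpow_sub_one hl0.ne', ← mul_div_assoc, inv_mul_eq_div]
    gcongr
    exact (one_le_div (by positivity)).mpr (rpow_le_rpow hM.le (hDM l hl) hε₀)
  calc ∑ l ∈ D, 1 / (l : ℝ) ≤ M ^ (-ε) * ∑ l ∈ D, (l : ℝ) ^ (ε - 1) := by
        rw [mul_sum]
        exact sum_le_sum hterm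
    _ ≤ M ^ (-ε) * exp (16 * log k + 8 * (k : ℝ) ^ ε) := by
        gcongr
        exact sum_smoothNumbers_rpow_sub_one_le hk hε hD

/-! ### Distortion of a density -/

section Mass

variable {Ω : Type*} [Fintype Ω] {w : Ω → ℝ} {B C : Set Ω}

/-- The mass of `B` under the density `w` with respect to the uniform probability measure. -/
noncomputable def mass (w : Ω → ℝ) (B : Set Ω) : ℝ := 𝔼 x, w x * B.indicator 1 x

lemma mass_mono (hw : 0 ≤ w) (h : B ⊆ C) : mass w B ≤ mass w C :=
  expect_le_expect fun x _ => mul_le_mul_of_nonneg_left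
    (Set.indicator_le_indicator_of_subset h (fun _ => zero_le_one) x) (hw x)

lemma mass_union_le (hw : 0 ≤ w) (B C : Set Ω) : mass w (B ∪ C) ≤ mass w B + mass w C := by
  simp only [mass]
  rw [← expect_add_distrib]
  refine expect_le_expect fun x _ => ?_
  rw [← mul_add]
  refine mul_le_mul_of_nonneg_left ?_ (hw x)
  by_cases hB : x ∈ B <;> by_cases hC : x ∈ C <;> simp [hB, hC]

lemma expect_mul_sum_indicator_sq (w : Ω → ℝ) {ι : Type*} (P : Finset ι) (c : ι → ℝ)
    (A : ι → Set Ω) :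
    𝔼 x, w x * (∑ i ∈ P, c i * (A i).indicator 1 x) ^ 2 =
      ∑ i ∈ P, ∑ j ∈ P, c i * c j * mass w (A i ∩ A j) := by
  have hpoint (x : Ω) : w x * (∑ i ∈ P, c i * (A i).indicator 1 x) ^ 2 =
      ∑ i ∈ P, ∑ j ∈ P, c i * c j * (w x * (A i ∩ A j).indicator 1 x) := by
    rw [sq, sum_mul_sum, mul_sum]
    refine sum_congr rfl fun i _ => ?_
    rw [mul_sum]
    refine sum_congr rfl fun j _ => ?_
    rw [Set.inter_indicator_one, Pi.mul_apply]
    ring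
  simp only [hpoint, expect_sum_comm, mass, mul_expect]

end Mass

section Fibres

variable {R : Type*} [CommRing R] {q r u : R} {f g w : R → ℝ} {B C : Set R}

/-- `f` is invariant under translation by multiples of `q`, that is, it factors through `R ⧸ (q)`.
A set `B` is called periodic if `(· ∈ B)` is. -/
def IsPeriodic {α : Type*} (q : R) (f : R → α) : Prop := ∀ x t, f (x + q * t) = f x

lemma IsPeriodic.mul (hf : IsPeriodic q f) (hg : IsPeriodic q g) : IsPeriodic q (f * g) :=
  fun x t => congrArg₂ (· * ·) (hf x t) (hg x t)

lemma IsPeriodic.of_dvd {α : Type*} {f : R → α} (hf : IsPeriodic q f) (h : q ∣ r) :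
    IsPeriodic r f := by
  obtain ⟨c, rfl⟩ := h
  intro x t
  rw [mul_assoc]
  exact hf x _

lemma IsPeriodic.indicator_one (hB : IsPeriodic q (· ∈ B)) :
    IsPeriodic q (B.indicator (1 : R → ℝ)) := fun x t => by
  simp only [Set.indicator, hB x t, Pi.one_apply]

/-- The residue class of `a` modulo `d`. -/
def residueClass (d a : R) : Set R := {x | d ∣ x - a}

lemma isPeriodic_residueClass (h : u ∣ q) (a : R) : IsPeriodic q (· ∈ residueClass u a) := by
  intro x t
  have heq : x + q * t - a = x - a + q * t := by ring
  exact propext <| (iff_of_eq (congrArg (u ∣ ·) heq)).trans (dvd_add_left (h.mul_right t))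

lemma residueClass_subset_of_dvd (h : u ∣ q) (a : R) : residueClass q a ⊆ residueClass u a :=
  fun _ hx => h.trans hx

lemma exists_residueClass_inter_subset (h : ∀ z, u ∣ z → q ∣ z → r ∣ z) (a b : R) :
    ∃ c, residueClass u a ∩ residueClass q b ⊆ residueClass r c := by
  rcases (residueClass u a ∩ residueClass q b).eq_empty_or_nonempty with hempty | ⟨c, hua, hqb⟩
  · exact ⟨0, hempty ▸ Set.empty_subset _⟩
  · refine ⟨c, fun x hx => h _ ?_ ?_⟩
    · simpa using dvd_sub hx.1 hua
    · simpa using dvd_sub hx.2 hqb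

variable [Fintype R]

lemma mass_one_residueClass (r a : R) : mass 1 (residueClass r a) = mass 1 (residueClass r 0) :=
  Fintype.expect_equiv (Equiv.subRight a) _ _ fun x => by
    by_cases h : r ∣ x - a <;> simp [residueClass, h]

/-- The average of `f` over the fibre `x + q R`, that is, the conditional expectation of `f` given
the residue modulo `q`. -/
noncomputable def fibreMean (q : R) (f : R → ℝ) (x : R) : ℝ := 𝔼 t, f (x + q * t)

lemma isPeriodic_fibreMean (q : R) (f : R → ℝ) : IsPeriodic q (fibreMean q f) := fun x t =>
  Fintype.expect_equiv (Equiv.addLeft t) _ _ fun s => by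
    rw [Equiv.coe_addLeft, mul_add, add_assoc]

lemma fibreMean_indicator_nonneg (q : R) (B : Set R) (x : R) :
    0 ≤ fibreMean q (B.indicator 1) x :=
  expect_nonneg fun _ _ => Set.indicator_nonneg (fun _ _ => zero_le_one) _

/-- The tower property of conditional expectation. -/
lemma expect_mul_fibreMean (hw : IsPeriodic q w) (f : R → ℝ) :
    𝔼 x, w x * fibreMean q f x = 𝔼 x, w x * f x := by
  have hshift (t : R) : 𝔼 x, w x * f (x + q * t) = 𝔼 x, w x * f x :=
    Fintype.expect_equiv (Equiv.addRight (q * t)) _ _ fun x => by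
      rw [Equiv.coe_addRight, hw x t]
  simp only [fibreMean, mul_expect]
  rw [expect_comm]
  simp only [hshift, Fintype.expect_const]

/-- Chinese remainder theorem: inside the class modulo `u`, a fibre modulo `q` meets the class
modulo `u r` in a single class modulo `r`. -/
lemma fibreMean_residueClass_mul_le (hu : u ∣ q) (hqr : IsCoprime q r) (a x : R) :
    fibreMean q ((residueClass (u * r) a).indicator 1) x ≤
      (residueClass u a).indicator 1 x * mass 1 (residueClass r 0) := by
  have hper (t : R) := isPeriodic_residueClass hu a x t
  by_cases hx : x ∈ residueClass u a
  · obtain ⟨v, v', hv⟩ := hqr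
    rw [Set.indicator_of_mem hx, Pi.one_apply, one_mul,
      ← mass_one_residueClass r (v * (a - x))]
    refine expect_le_expect fun t _ => ?_
    rw [Pi.one_apply, one_mul]
    refine Set.indicator_le_indicator_of_subset (s := {t | x + q * t ∈ residueClass (u * r) a})
      (fun t ht => ?_) (fun _ => zero_le_one) t
    have hr : r ∣ x + q * t - a := (dvd_mul_left r u).trans ht
    have heq : t - v * (a - x) = v * (x + q * t - a) + r * (v' * t) := by
      linear_combination (-t) * hv
    exact (heq ▸ dvd_add (hr.mul_left v) (dvd_mul_right r _) : r ∣ t - v * (a - x))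
  · rw [Set.indicator_of_notMem hx, zero_mul]
    refine (expect_eq_zero fun t _ => Set.indicator_of_notMem (fun ht => hx ?_) _).le
    exact (hper t).mp (residueClass_subset_of_dvd (dvd_mul_right u r) a ht)

lemma mass_residueClass_mul_le (hw₀ : 0 ≤ w) (hw : IsPeriodic q w) (hu : u ∣ q)
    (hqr : IsCoprime q r) (a : R) :
    mass w (residueClass (u * r) a) ≤ mass 1 (residueClass r 0) * mass w (residueClass u a) := by
  calc mass w (residueClass (u * r) a)
      = 𝔼 x, w x * fibreMean q ((residueClass (u * r) a).indicator 1) x :=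
        (expect_mul_fibreMean hw _).symm
    _ ≤ 𝔼 x, w x * ((residueClass u a).indicator 1 x * mass 1 (residueClass r 0)) :=
        expect_le_expect fun x _ =>
          mul_le_mul_of_nonneg_left (fibreMean_residueClass_mul_le hu hqr a x) (hw₀ x)
    _ = mass 1 (residueClass r 0) * mass w (residueClass u a) := by
        simp only [← mul_assoc, ← expect_mul]
        exact mul_comm _ _

/-- The factor by which a density is multiplied in order to avoid `B`. On a fibre modulo `q` in
which `B` has proportion `α`: if `α < 1 / 2`, the set `B` is removed and its complement rescaled by
`1 / (1 - α)`; otherwise the factor is `2` off `B` and `2 - 1 / α` on `B`, which removes as much of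
`B` as a factor bounded by `2` can. -/
noncomputable def distortion (q : R) (B : Set R) (x : R) : ℝ :=
  if fibreMean q (B.indicator 1) x < 1 / 2
  then (1 - B.indicator 1 x) / (1 - fibreMean q (B.indicator 1) x)
  else 2 - B.indicator 1 x / fibreMean q (B.indicator 1) x

lemma distortion_nonneg (q : R) (B : Set R) : 0 ≤ distortion q B := by
  intro x
  simp only [distortion, Pi.zero_apply]
  split_ifs with hα
  · refine div_nonneg ?_ (by linarith)
    by_cases hx : x ∈ B <;> simp [hx]
  · rw [sub_nonneg, div_le_iff₀ (by linarith)]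
    by_cases hx : x ∈ B <;> simp [hx] <;> linarith

lemma distortion_le_two (q : R) (B : Set R) (x : R) : distortion q B x ≤ 2 := by
  rw [distortion]
  split_ifs with hα
  · rw [div_le_iff₀ (by linarith)]
    by_cases hx : x ∈ B <;> simp [hx] <;> linarith
  · exact sub_le_self _ <| div_nonneg (Set.indicator_nonneg (fun _ _ => zero_le_one) _)
      (by linarith)

lemma isPeriodic_distortion (h : q ∣ r) (hB : IsPeriodic r (· ∈ B)) :
    IsPeriodic r (distortion q B) := by
  intro x t
  simp only [distortion, hB.indicator_one x t, (isPeriodic_fibreMean q _).of_dvd h x t]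

lemma fibreMean_distortion (q : R) (B : Set R) (x : R) : fibreMean q (distortion q B) x = 1 := by
  set α := fibreMean q (B.indicator 1) x with hα
  have hper (t : R) : fibreMean q (B.indicator 1) (x + q * t) = α := isPeriodic_fibreMean q _ x t
  simp only [fibreMean, distortion] at hper ⊢
  simp only [hper]
  split_ifs with hlt
  · rw [← expect_div, expect_sub_distrib, Fintype.expect_const, ← fibreMean, ← hα,
      div_self (by linarith)]
  · rw [expect_sub_distrib, ← expect_div, Fintype.expect_const, ← fibreMean, ← hα,
      div_self (by linarith)]
    norm_num

/-- After distortion `B` has proportion `0` or `2 α - 1` in a fibre. -/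
lemma fibreMean_distortion_mul_indicator_le (q : R) (B : Set R) (x : R) :
    fibreMean q (fun x => distortion q B x * B.indicator 1 x) x ≤
      fibreMean q (B.indicator 1) x ^ 2 := by
  set α := fibreMean q (B.indicator 1) x with hα
  have hper (t : R) : fibreMean q (B.indicator 1) (x + q * t) = α := isPeriodic_fibreMean q _ x t
  have hvalue (t : R) : distortion q B (x + q * t) * B.indicator 1 (x + q * t) =
      (if α < 1 / 2 then 0 else 2 - 1 / α) * B.indicator 1 (x + q * t) := by
    rw [distortion, hper]
    by_cases hx : x + q * t ∈ B <;> simp [hx]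
  rw [fibreMean]
  simp only [hvalue, ← mul_expect]
  rw [← fibreMean, ← hα]
  split_ifs with hlt
  · rw [zero_mul]
    positivity
  · rw [sub_mul, one_div_mul_cancel (by linarith)]
    linarith [sq_nonneg (α - 1)]

lemma mass_mul_distortion_le_two_mul (hw : 0 ≤ w) (q : R) (B C : Set R) :
    mass (w * distortion q B) C ≤ 2 * mass w C := by
  simp only [mass, mul_expect]
  refine expect_le_expect fun x _ => ?_
  calc w x * distortion q B x * C.indicator 1 x ≤ w x * 2 * C.indicator 1 x := by
        gcongr
        · exact Set.indicator_nonneg (fun _ _ => zero_le_one) _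
        · exact hw x
        · exact distortion_le_two q B x
    _ = 2 * (w x * C.indicator 1 x) := by ring

lemma mass_mul_distortion_of_isPeriodic (hw : IsPeriodic q w) (hC : IsPeriodic q (· ∈ C))
    (B : Set R) : mass (w * distortion q B) C = mass w C := by
  calc mass (w * distortion q B) C
      = 𝔼 x, w x * C.indicator 1 x * distortion q B x :=
        expect_congr rfl fun x _ => mul_right_comm _ _ _
    _ = 𝔼 x, w x * C.indicator 1 x * fibreMean q (distortion q B) x :=
        (expect_mul_fibreMean (hw.mul hC.indicator_one) _).symm
    _ = mass w C := by simp only [fibreMean_distortion, mul_one, mass]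

lemma mass_mul_distortion_self_le (hw₀ : 0 ≤ w) (hw : IsPeriodic q w) (B : Set R) :
    mass (w * distortion q B) B ≤ 𝔼 x, w x * fibreMean q (B.indicator 1) x ^ 2 := by
  calc mass (w * distortion q B) B
      = 𝔼 x, w x * (distortion q B x * B.indicator 1 x) :=
        expect_congr rfl fun x _ => mul_assoc _ _ _
    _ = 𝔼 x, w x * fibreMean q (fun x => distortion q B x * B.indicator 1 x) x :=
        (expect_mul_fibreMean hw _).symm
    _ ≤ 𝔼 x, w x * fibreMean q (B.indicator 1) x ^ 2 :=
        expect_le_expect fun x _ =>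
          mul_le_mul_of_nonneg_left (fibreMean_distortion_mul_indicator_le q B x) (hw₀ x)

end Fibres

/-! ### Residue classes in `ZMod N` -/

lemma natCast_dvd_intCast_iff {N d : ℕ} (hd : d ∣ N) (z : ℤ) :
    (d : ZMod N) ∣ (z : ZMod N) ↔ (d : ℤ) ∣ z := by
  refine ⟨fun h => ?_, fun h => by simpa using map_dvd (Int.castRingHom (ZMod N)) h⟩
  have hcast := map_dvd (ZMod.castHom hd (ZMod d)) h
  rw [map_natCast, ZMod.natCast_self, zero_dvd_iff, map_intCast] at hcast
  exact (ZMod.intCast_zmod_eq_zero_iff_dvd z d).mp hcast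

lemma natCast_lcm_dvd {N u v : ℕ} (hu : u ∣ N) (hv : v ∣ N) {z : ZMod N}
    (huz : (u : ZMod N) ∣ z) (hvz : (v : ZMod N) ∣ z) : (u.lcm v : ZMod N) ∣ z := by
  obtain ⟨z, rfl⟩ := ZMod.intCast_surjective z
  rw [natCast_dvd_intCast_iff hu] at huz
  rw [natCast_dvd_intCast_iff hv] at hvz
  rw [natCast_dvd_intCast_iff (Nat.lcm_dvd hu hv), Int.natCast_dvd] at *
  exact Nat.lcm_dvd huz hvz

lemma mass_one_residueClass_natCast {N d : ℕ} [NeZero N] (hd : d ∣ N) (a : ZMod N) :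
    mass 1 (residueClass (d : ZMod N) a) = 1 / d := by
  have hN := NeZero.ne N
  have hmem (x : ZMod N) :
      x ∈ residueClass (d : ZMod N) 0 ↔ x ∈ AddSubgroup.zmultiples (d : ZMod N) := by
    rw [residueClass, Set.mem_ofPred_eq, sub_zero, AddSubgroup.mem_zmultiples_iff]
    refine ⟨fun ⟨c, hc⟩ => ?_, fun ⟨c, hc⟩ => ⟨c, ?_⟩⟩
    · obtain ⟨c, rfl⟩ := ZMod.intCast_surjective c
      exact ⟨c, by rw [hc, zsmul_eq_mul, mul_comm]⟩
    · rw [← hc, zsmul_eq_mul, mul_comm]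
  have hcard : #{x | x ∈ residueClass (d : ZMod N) 0} = N / d := by
    simp only [hmem]
    rw [← Fintype.card_subtype, ← Nat.card_eq_fintype_card]
    exact (Nat.card_zmultiples _).trans <| by
      rw [ZMod.addOrderOf_coe d hN, Nat.gcd_eq_right hd]
  rw [mass_one_residueClass, mass, Fintype.expect_eq_sum_div_card, ZMod.card]
  simp only [Pi.one_apply, one_mul, Set.indicator_apply, sum_boole, hcard]
  rw [Nat.cast_div_charZero hd]
  field_simp

/-! ### Smooth divisors -/

/-- The divisors of `N` all of whose prime factors are less than `k`. -/
def smoothDivisors (N k : ℕ) : Finset ℕ := {d ∈ N.divisors | d ∈ k.smoothNumbers}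

/-- A common multiple of the divisors of `N` all of whose prime factors are less than `k`, with no
further prime factors. -/
def smoothModulus (N k : ℕ) : ℕ := ∏ d ∈ smoothDivisors N k, d

/-- The mass `τ(l) / l` that a sieve density is allowed to give to a class modulo `l`. -/
noncomputable def divisorDensity (l : ℕ) : ℝ := #l.divisors / l

lemma mem_smoothDivisors {N k d : ℕ} [NeZero N] :
    d ∈ smoothDivisors N k ↔ d ∣ N ∧ d ∈ k.smoothNumbers := by
  rw [smoothDivisors, mem_filter, Nat.mem_divisors, and_iff_left (NeZero.ne N)]

lemma mem_smoothNumbers_of_mem_smoothDivisors {N k d : ℕ} (hd : d ∈ smoothDivisors N k) :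
    d ∈ k.smoothNumbers :=
  (mem_filter.mp hd).2

lemma dvd_of_mem_smoothDivisors {N k d : ℕ} (hd : d ∈ smoothDivisors N k) : d ∣ N :=
  Nat.dvd_of_mem_divisors (mem_filter.mp hd).1

lemma smoothDivisors_succ_of_not_prime (N : ℕ) {k : ℕ} (hk : ¬ k.Prime) :
    smoothDivisors N (k + 1) = smoothDivisors N k := by
  simp only [smoothDivisors, Nat.smoothNumbers_succ hk]

lemma lcm_mem_smoothDivisors {N k u v : ℕ} [NeZero N] (hu : u ∈ smoothDivisors N k)
    (hv : v ∈ smoothDivisors N k) : u.lcm v ∈ smoothDivisors N k := by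
  rw [mem_smoothDivisors] at *
  exact ⟨Nat.lcm_dvd hu.1 hv.1, Nat.mem_smoothNumbers_of_dvd
    (Nat.mul_mem_smoothNumbers hu.2 hv.2) (Nat.lcm_dvd_mul u v)⟩

lemma ordCompl_mem_smoothDivisors {N p d : ℕ} [NeZero N] (hp : p.Prime)
    (hd : d ∈ smoothDivisors N (p + 1)) : ordCompl[p] d ∈ smoothDivisors N p := by
  rw [mem_smoothDivisors] at *
  refine ⟨(Nat.ordCompl_dvd d p).trans hd.1, Nat.mem_smoothNumbers'.mpr fun r hr hrd => ?_⟩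
  have hrp : r ≠ p := by
    rintro rfl
    exact Nat.not_dvd_ordCompl hp (Nat.ne_zero_of_mem_smoothNumbers hd.2) hrd
  have := Nat.mem_smoothNumbers'.mp hd.2 r hr (hrd.trans (Nat.ordCompl_dvd d p))
  lia

lemma smoothModulus_dvd_succ (N k : ℕ) : smoothModulus N k ∣ smoothModulus N (k + 1) :=
  prod_dvd_prod_of_subset _ _ _ <| monotone_filter_right _ fun _ _ hd =>
    Nat.smoothNumbers_mono k.le_succ hd

lemma natCast_dvd_smoothModulus {N k d : ℕ} (R : Type*) [CommRing R]
    (hd : d ∈ smoothDivisors N k) : (d : R) ∣ smoothModulus N k :=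
  Nat.cast_dvd_cast (dvd_prod_of_mem _ hd)

lemma isCoprime_smoothModulus_prime_pow (N : ℕ) {p : ℕ} (hp : p.Prime) (e : ℕ) (R : Type*)
    [CommRing R] : IsCoprime (smoothModulus N p : R) ((p ^ e : ℕ) : R) :=
  Nat.Coprime.cast <| Nat.Coprime.pow_right _ <| Nat.Coprime.prod_left fun _ hd =>
    (hp.smoothNumbers_coprime (mem_smoothNumbers_of_mem_smoothDivisors hd)).symm

lemma divisorDensity_nonneg (l : ℕ) : 0 ≤ divisorDensity l := by
  rw [divisorDensity]
  positivity

lemma one_div_le_divisorDensity {l : ℕ} (hl : l ≠ 0) : 1 / (l : ℝ) ≤ divisorDensity l := by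
  rw [divisorDensity]
  gcongr
  exact Nat.one_le_cast.mpr (card_pos.mpr (Nat.nonempty_divisors.mpr hl))

lemma two_mul_one_div_mul_divisorDensity_le {p u e : ℕ} (hp : p.Prime) (hpu : p.Coprime u)
    (he : 1 ≤ e) :
    2 * (1 / ((p ^ e : ℕ) : ℝ) * divisorDensity u) ≤ divisorDensity (u * p ^ e) := by
  have hcard : 2 * #u.divisors ≤ #(u * p ^ e).divisors := by
    rw [(hpu.symm.pow_right e).card_divisors_mul, Nat.divisors_prime_pow hp, card_map, card_range,
      mul_comm]
    gcongr
    lia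
  calc 2 * (1 / ((p ^ e : ℕ) : ℝ) * divisorDensity u)
      = (2 * #u.divisors : ℕ) / (u * p ^ e : ℕ) := by
        rw [divisorDensity]
        push_cast
        ring
    _ ≤ divisorDensity (u * p ^ e) := by
        rw [divisorDensity]
        gcongr

/-- A pair with least common multiple `l` consists of two of the `τ(l)` divisors of `l`. -/
lemma sum_sum_divisorDensity_lcm_le (N k : ℕ) [NeZero N] :
    ∑ u ∈ smoothDivisors N k, ∑ v ∈ smoothDivisors N k, divisorDensity (u.lcm v) ≤
      ∑ l ∈ smoothDivisors N k, (#l.divisors : ℝ) ^ 3 / l := by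
  set D := smoothDivisors N k
  have hmaps : ∀ z ∈ D ×ˢ D, z.1.lcm z.2 ∈ D := fun z hz =>
    lcm_mem_smoothDivisors (mem_product.mp hz).1 (mem_product.mp hz).2
  rw [← sum_product', ← sum_fiberwise_of_maps_to hmaps]
  refine sum_le_sum fun l hl => ?_
  have hl₀ : l ≠ 0 :=
    Nat.ne_zero_of_mem_smoothNumbers (mem_smoothNumbers_of_mem_smoothDivisors hl)
  have hcard : #{z ∈ D ×ˢ D | z.1.lcm z.2 = l} ≤ #l.divisors ^ 2 := by
    rw [sq, ← card_product]
    refine card_le_card fun z hz => ?_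
    obtain ⟨-, rfl⟩ := mem_filter.mp hz
    exact mem_product.mpr ⟨Nat.mem_divisors.mpr ⟨Nat.dvd_lcm_left _ _, hl₀⟩,
      Nat.mem_divisors.mpr ⟨Nat.dvd_lcm_right _ _, hl₀⟩⟩
  calc ∑ z ∈ D ×ˢ D with z.1.lcm z.2 = l, divisorDensity (z.1.lcm z.2)
      = #{z ∈ D ×ˢ D | z.1.lcm z.2 = l} * divisorDensity l := by
        rw [← nsmul_eq_mul, ← sum_const]
        exact sum_congr rfl fun z hz => by rw [(mem_filter.mp hz).2]
    _ ≤ (#l.divisors ^ 2 : ℕ) * divisorDensity l := by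
        gcongr
        exact divisorDensity_nonneg l
    _ = (#l.divisors : ℝ) ^ 3 / l := by
        rw [divisorDensity]
        push_cast
        ring

/-! ### Unions of residue classes -/

section Covered

variable {R ι : Type*} [CommRing R] {a : ι → R} {m : ι → ℕ}

/-- The union of the classes of `a i` modulo `m i` with `m i ∈ S`. -/
def covered (a : ι → R) (m : ι → ℕ) (S : Set ℕ) : Set R :=
  {x | ∃ i, m i ∈ S ∧ x ∈ residueClass (m i : R) (a i)}

lemma covered_union (a : ι → R) (m : ι → ℕ) (S T : Set ℕ) :
    covered a m (S ∪ T) = covered a m S ∪ covered a m T := by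
  ext x
  simp only [covered, Set.mem_union, Set.mem_ofPred_eq, or_and_right, exists_or]

lemma isPeriodic_covered {S : Set ℕ} {q : R} (h : ∀ i, m i ∈ S → (m i : R) ∣ q) :
    IsPeriodic q (· ∈ covered a m S) := fun x t =>
  propext <| exists_congr fun i => and_congr_right fun hi =>
    iff_of_eq <| isPeriodic_residueClass (h i hi) (a i) x t

lemma indicator_covered_le_sum [Fintype ι] (a : ι → R) (m : ι → ℕ) (S : Set ℕ)
    [DecidablePred (· ∈ S)] (x : R) :
    (covered a m S).indicator 1 x ≤
      ∑ i with m i ∈ S, (residueClass (m i : R) (a i)).indicator (1 : R → ℝ) x := by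
  have hnonneg (i : ι) : 0 ≤ (residueClass (m i : R) (a i)).indicator (1 : R → ℝ) x :=
    Set.indicator_nonneg (fun _ _ => zero_le_one) x
  by_cases hx : x ∈ covered a m S
  · obtain ⟨i, hi, hxi⟩ := id hx
    rw [Set.indicator_of_mem hx]
    refine le_trans (le_of_eq ?_)
      (single_le_sum (fun j _ => hnonneg j) (mem_filter.mpr ⟨mem_univ i, hi⟩))
    rw [Set.indicator_of_mem hxi]
  · rw [Set.indicator_of_notMem hx]
    exact sum_nonneg fun i _ => hnonneg i

end Covered

lemma sum_comp_le {ι κ : Type*} [DecidableEq κ] {s : ℕ} {P : Finset ι} {T : Finset κ}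
    {f : ι → κ} (hf : ∀ i ∈ P, f i ∈ T) (hs : ∀ t, #{i ∈ P | f i = t} ≤ s) {g : κ → ℝ}
    (hg : ∀ t ∈ T, 0 ≤ g t) :
    ∑ i ∈ P, g (f i) ≤ s * ∑ t ∈ T, g t := by
  rw [← sum_fiberwise_of_maps_to' hf, mul_sum]
  refine sum_le_sum fun t ht => ?_
  rw [sum_const, nsmul_eq_mul]
  exact mul_le_mul_of_nonneg_right (Nat.cast_le.mpr (hs t)) (hg t ht)

lemma sum_sum_comp_le {ι κ : Type*} [DecidableEq κ] {s : ℕ} {P : Finset ι} {T : Finset κ}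
    {f : ι → κ} (hf : ∀ i ∈ P, f i ∈ T) (hs : ∀ t, #{i ∈ P | f i = t} ≤ s) {g : κ → κ → ℝ}
    (hg : ∀ t ∈ T, ∀ t' ∈ T, 0 ≤ g t t') :
    ∑ i ∈ P, ∑ j ∈ P, g (f i) (f j) ≤ s ^ 2 * ∑ t ∈ T, ∑ t' ∈ T, g t t' := by
  calc ∑ i ∈ P, ∑ j ∈ P, g (f i) (f j)
      ≤ ∑ i ∈ P, s * ∑ t' ∈ T, g (f i) t' :=
        sum_le_sum fun i hi => sum_comp_le hf hs (hg _ (hf i hi))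
    _ ≤ s * ∑ t ∈ T, s * ∑ t' ∈ T, g t t' :=
        sum_comp_le (g := fun t => s * ∑ t' ∈ T, g t t') hf hs fun t ht =>
          mul_nonneg s.cast_nonneg (sum_nonneg (hg t ht))
    _ = s ^ 2 * ∑ t ∈ T, ∑ t' ∈ T, g t t' := by
        rw [← mul_sum]
        ring

lemma sum_Ico_one_div_pow_le {p : ℕ} (hp : 2 ≤ p) (n : ℕ) :
    ∑ e ∈ Ico 1 n, (1 / (p : ℝ)) ^ e ≤ 2 / p := by
  have hp2 : (2 : ℝ) ≤ p := Nat.ofNat_le_cast.mpr hp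
  have hhalf : 1 / (p : ℝ) ≤ 1 / 2 := by gcongr
  calc ∑ e ∈ Ico 1 n, (1 / (p : ℝ)) ^ e ≤ (1 / (p : ℝ)) ^ 1 / (1 - 1 / p) :=
        geom_sum_Ico_le_of_lt_one (by positivity) (by linarith)
    _ ≤ 1 / p / (1 / 2) := by
        rw [pow_one]
        gcongr
        linarith
    _ = 2 / p := by ring

/-! ### Sieve densities -/

section SmoothDensity

variable {N k p : ℕ} [NeZero N] {w : ZMod N → ℝ}

/-- A probability density on `ZMod N` that has been distorted at the primes less than `k` only: it
is determined by the residue modulo `smoothModulus N k`, and classes modulo `k`-smooth `d` have at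
most `τ(d)` times their uniform mass. -/
structure IsSmoothDensity (k : ℕ) (w : ZMod N → ℝ) : Prop where
  nonneg : 0 ≤ w
  mass_univ : mass w Set.univ = 1
  periodic : IsPeriodic (smoothModulus N k : ZMod N) w
  mass_residueClass_le : ∀ d ∈ smoothDivisors N k, ∀ c,
    mass w (residueClass (d : ZMod N) c) ≤ divisorDensity d

lemma isSmoothDensity_one (k : ℕ) : IsSmoothDensity k (1 : ZMod N → ℝ) where
  nonneg := zero_le_one
  mass_univ := by simp [mass]
  periodic _ _ := rfl
  mass_residueClass_le d hd c := by
    rw [mass_one_residueClass_natCast (dvd_of_mem_smoothDivisors hd)]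
    exact one_div_le_divisorDensity
      (Nat.ne_zero_of_mem_smoothNumbers (mem_smoothNumbers_of_mem_smoothDivisors hd))

namespace IsSmoothDensity

lemma succ_of_not_prime (hw : IsSmoothDensity k w) (hk : ¬ k.Prime) :
    IsSmoothDensity (k + 1) w where
  nonneg := hw.nonneg
  mass_univ := hw.mass_univ
  periodic := hw.periodic.of_dvd (Nat.cast_dvd_cast (smoothModulus_dvd_succ N k))
  mass_residueClass_le := by
    rw [smoothDivisors_succ_of_not_prime N hk]
    exact hw.mass_residueClass_le

lemma mass_residueClass_inter_le (hw : IsSmoothDensity k w) {u v : ℕ}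
    (hu : u ∈ smoothDivisors N k) (hv : v ∈ smoothDivisors N k) (a b : ZMod N) :
    mass w (residueClass (u : ZMod N) a ∩ residueClass (v : ZMod N) b) ≤
      divisorDensity (u.lcm v) := by
  obtain ⟨c, hc⟩ := exists_residueClass_inter_subset
    (fun z => natCast_lcm_dvd (dvd_of_mem_smoothDivisors hu) (dvd_of_mem_smoothDivisors hv)) a b
  exact (mass_mono hw.nonneg hc).trans
    (hw.mass_residueClass_le _ (lcm_mem_smoothDivisors hu hv) c)

/-- The factor `2` lost by distortion is absorbed by the extra divisors of `d` if `p ∣ d`. -/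
lemma mass_mul_distortion_residueClass_le (hp : p.Prime) (hw : IsSmoothDensity p w)
    (B : Set (ZMod N)) {d : ℕ} (hd : d ∈ smoothDivisors N (p + 1)) (c : ZMod N) :
    mass (w * distortion (smoothModulus N p : ZMod N) B) (residueClass (d : ZMod N) c) ≤
      divisorDensity d := by
  have hu := ordCompl_mem_smoothDivisors hp hd
  have hpd : d = ordCompl[p] d * p ^ d.factorization p :=
    ((mul_comm _ _).trans (Nat.ordProj_mul_ordCompl_eq_self d p)).symm
  have hpN : p ^ d.factorization p ∣ N :=
    (Nat.ordProj_dvd d p).trans (dvd_of_mem_smoothDivisors hd)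
  generalize ordCompl[p] d = u at hu hpd
  generalize d.factorization p = e at hpd hpN
  subst hpd
  have huq := natCast_dvd_smoothModulus (ZMod N) hu
  rcases Nat.eq_zero_or_pos e with rfl | he
  · rw [pow_zero, mul_one,
      mass_mul_distortion_of_isPeriodic hw.periodic (isPeriodic_residueClass huq c)]
    exact hw.mass_residueClass_le u hu c
  · calc mass (w * distortion (smoothModulus N p : ZMod N) B)
          (residueClass ((u * p ^ e : ℕ) : ZMod N) c)
        ≤ 2 * mass w (residueClass ((u * p ^ e : ℕ) : ZMod N) c) :=
          mass_mul_distortion_le_two_mul hw.nonneg _ _ _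
      _ ≤ 2 * (mass 1 (residueClass ((p ^ e : ℕ) : ZMod N) 0) *
            mass w (residueClass (u : ZMod N) c)) := by
          rw [Nat.cast_mul]
          gcongr
          exact mass_residueClass_mul_le hw.nonneg hw.periodic huq
            (isCoprime_smoothModulus_prime_pow N hp e _) c
      _ ≤ 2 * (1 / ((p ^ e : ℕ) : ℝ) * divisorDensity u) := by
          rw [mass_one_residueClass_natCast hpN]
          gcongr
          exact hw.mass_residueClass_le u hu c
      _ ≤ divisorDensity (u * p ^ e) :=
          two_mul_one_div_mul_divisorDensity_le hp
            (hp.smoothNumbers_coprime (mem_smoothNumbers_of_mem_smoothDivisors hu)) he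

lemma mul_distortion (hp : p.Prime) (hw : IsSmoothDensity p w) {B : Set (ZMod N)}
    (hB : IsPeriodic (smoothModulus N (p + 1) : ZMod N) (· ∈ B)) :
    IsSmoothDensity (p + 1) (w * distortion (smoothModulus N p : ZMod N) B) where
  nonneg := mul_nonneg hw.nonneg (distortion_nonneg _ B)
  mass_univ := by
    rw [mass_mul_distortion_of_isPeriodic hw.periodic fun _ _ => rfl, hw.mass_univ]
  periodic :=
    have hdvd : (smoothModulus N p : ZMod N) ∣ smoothModulus N (p + 1) :=
      Nat.cast_dvd_cast (smoothModulus_dvd_succ N p)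
    (hw.periodic.of_dvd hdvd).mul (isPeriodic_distortion hdvd hB)
  mass_residueClass_le _ hd c := hw.mass_mul_distortion_residueClass_le hp B hd c

end IsSmoothDensity

end SmoothDensity

/-! ### The sieve -/

/-- The numbers with largest prime factor `p`, if `p` is prime; there are none otherwise. -/
def newSmoothNumbers (p : ℕ) : Set ℕ := (p + 1).smoothNumbers \ p.smoothNumbers

lemma one_le_factorization_of_mem_newSmoothNumbers {p d : ℕ} (hp : p.Prime)
    (hd : d ∈ newSmoothNumbers p) : 1 ≤ d.factorization p := by
  have hd₀ := Nat.ne_zero_of_mem_smoothNumbers hd.1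
  refine (hp.dvd_iff_one_le_factorization hd₀).mp ?_
  by_contra hpd
  refine hd.2 (Nat.mem_smoothNumbers'.mpr fun r hr hrd => ?_)
  have hrp : r ≠ p := by
    rintro rfl
    exact hpd hrd
  have := Nat.mem_smoothNumbers'.mp hd.1 r hr hrd
  lia

section Sieve

variable {N k p s y z : ℕ} [NeZero N] {ι : Type*} {a : ι → ZMod N} {m : ι → ℕ}
  {w : ZMod N → ℝ}

lemma mem_smoothDivisors_of_mem_newSmoothNumbers (hm : ∀ i, m i ∣ N) {i : ι}
    (hi : m i ∈ newSmoothNumbers p) : m i ∈ smoothDivisors N (p + 1) :=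
  mem_smoothDivisors.mpr ⟨hm i, hi.1⟩

lemma isPeriodic_newlyCovered (hm : ∀ i, m i ∣ N) (a : ι → ZMod N) (p : ℕ) :
    IsPeriodic (smoothModulus N (p + 1) : ZMod N)
      (· ∈ covered a m (newSmoothNumbers p)) :=
  isPeriodic_covered fun _ hi =>
    natCast_dvd_smoothModulus _ (mem_smoothDivisors_of_mem_newSmoothNumbers hm hi)

variable [Fintype ι]

lemma fibreMean_newlyCovered_le (hp : p.Prime) (hm : ∀ i, m i ∣ N) (a : ι → ZMod N)
    (x : ZMod N) :
    fibreMean (smoothModulus N p : ZMod N)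
        ((covered a m (newSmoothNumbers p)).indicator 1) x ≤
      ∑ i with m i ∈ newSmoothNumbers p, (1 / (p : ℝ)) ^ (m i).factorization p *
        (residueClass ((ordCompl[p] (m i) : ℕ) : ZMod N) (a i)).indicator 1 x := by
  refine (expect_le_expect (f := fun t => _) fun t _ => indicator_covered_le_sum a m _ _).trans ?_
  rw [expect_sum_comm]
  refine sum_le_sum fun i hi => ?_
  have hmi := mem_smoothDivisors_of_mem_newSmoothNumbers hm (mem_filter.mp hi).2
  have hcast : (m i : ZMod N) = (ordCompl[p] (m i) : ℕ) * ((p ^ (m i).factorization p : ℕ)) := by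
    rw [← Nat.cast_mul, mul_comm, Nat.ordProj_mul_ordCompl_eq_self]
  rw [hcast]
  refine (fibreMean_residueClass_mul_le
    (natCast_dvd_smoothModulus _ (ordCompl_mem_smoothDivisors hp hmi))
    (isCoprime_smoothModulus_prime_pow N hp _ _) (a i) x).trans_eq ?_
  rw [mass_one_residueClass_natCast ((Nat.ordProj_dvd _ p).trans (hm i)), Nat.cast_pow,
    one_div_pow, mul_comm]

/-- Bound for the mass covered when passing from `k` to `k + 1`, if at most `s` moduli are equal. -/
noncomputable def stepLoss (N s k : ℕ) : ℝ :=
  s ^ 2 * (2 / k) ^ 2 * ∑ l ∈ smoothDivisors N k, (#l.divisors : ℝ) ^ 3 / l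

lemma stepLoss_nonneg (N s k : ℕ) : 0 ≤ stepLoss N s k := by
  rw [stepLoss]
  positivity

lemma sum_sum_prime_pow_mul_divisorDensity_lcm_le (hp : p.Prime) (N n : ℕ) [NeZero N] :
    ∑ t ∈ smoothDivisors N p ×ˢ Ico 1 n, ∑ t' ∈ smoothDivisors N p ×ˢ Ico 1 n,
        (1 / (p : ℝ)) ^ t.2 * (1 / (p : ℝ)) ^ t'.2 * divisorDensity (t.1.lcm t'.1) ≤
      (2 / p) ^ 2 * ∑ l ∈ smoothDivisors N p, (#l.divisors : ℝ) ^ 3 / l := by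
  calc _ = (∑ e ∈ Ico 1 n, (1 / (p : ℝ)) ^ e) ^ 2 *
        ∑ u ∈ smoothDivisors N p, ∑ v ∈ smoothDivisors N p, divisorDensity (u.lcm v) := by
        simp only [sum_product, sq, mul_assoc, ← mul_sum, ← sum_mul]
    _ ≤ _ := by
        refine mul_le_mul ?_ (sum_sum_divisorDensity_lcm_le N p) ?_ (sq_nonneg _)
        · gcongr
          exact sum_Ico_one_div_pow_le hp.two_le n
        · exact sum_nonneg fun u _ => sum_nonneg fun v _ => divisorDensity_nonneg _

lemma sum_sum_newSmoothNumbers_le (hp : p.Prime) (hm : ∀ i, m i ∣ N)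
    (hs : ∀ m₀, #{i | m i = m₀} ≤ s) :
    ∑ i with m i ∈ newSmoothNumbers p, ∑ j with m j ∈ newSmoothNumbers p,
        (1 / (p : ℝ)) ^ (m i).factorization p * (1 / (p : ℝ)) ^ (m j).factorization p *
          divisorDensity ((ordCompl[p] (m i)).lcm (ordCompl[p] (m j))) ≤
      stepLoss N s p := by
  set P : Finset ι := {i | m i ∈ newSmoothNumbers p}
  let f : ι → ℕ × ℕ := fun i => (ordCompl[p] (m i), (m i).factorization p)
  let T : Finset (ℕ × ℕ) := smoothDivisors N p ×ˢ Ico 1 (N + 1)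
  have hmaps : ∀ i ∈ P, f i ∈ T := fun i hi => by
    have hi := (mem_filter.mp hi).2
    refine mem_product.mpr ⟨ordCompl_mem_smoothDivisors hp
      (mem_smoothDivisors_of_mem_newSmoothNumbers hm hi),
      mem_Ico.mpr ⟨one_le_factorization_of_mem_newSmoothNumbers hp hi, ?_⟩⟩
    exact (Nat.factorization_lt p (Nat.ne_zero_of_mem_smoothNumbers hi.1)).trans_le
      ((Nat.le_of_dvd (NeZero.pos N) (hm i)).trans N.le_succ)
  have hfibre : ∀ t, #{i ∈ P | f i = t} ≤ s := fun t => by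
    refine (card_le_card fun i hi => ?_).trans (hs (t.1 * p ^ t.2))
    obtain ⟨-, rfl⟩ := mem_filter.mp hi
    exact mem_filter.mpr ⟨mem_univ i, by rw [mul_comm, Nat.ordProj_mul_ordCompl_eq_self]⟩
  calc _ ≤ s ^ 2 * ∑ t ∈ T, ∑ t' ∈ T, (1 / (p : ℝ)) ^ t.2 * (1 / (p : ℝ)) ^ t'.2 *
          divisorDensity (t.1.lcm t'.1) :=
        sum_sum_comp_le (g := fun t t' => (1 / (p : ℝ)) ^ t.2 * (1 / (p : ℝ)) ^ t'.2 *
          divisorDensity (t.1.lcm t'.1)) hmaps hfibre fun t _ t' _ =>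
            mul_nonneg (by positivity) (divisorDensity_nonneg _)
    _ ≤ stepLoss N s p := by
        rw [stepLoss, mul_assoc]
        gcongr
        exact sum_sum_prime_pow_mul_divisorDensity_lcm_le hp N _

lemma second_moment_newlyCovered_le (hp : p.Prime) (hw : IsSmoothDensity p w)
    (hm : ∀ i, m i ∣ N) (hs : ∀ m₀, #{i | m i = m₀} ≤ s) (a : ι → ZMod N) :
    𝔼 x, w x * fibreMean (smoothModulus N p : ZMod N)
        ((covered a m (newSmoothNumbers p)).indicator 1) x ^ 2 ≤
      stepLoss N s p := by
  refine le_trans ?_ (sum_sum_newSmoothNumbers_le hp hm hs)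
  calc 𝔼 x, w x * fibreMean (smoothModulus N p : ZMod N)
          ((covered a m (newSmoothNumbers p)).indicator 1) x ^ 2
      ≤ 𝔼 x, w x * (∑ i with m i ∈ newSmoothNumbers p, (1 / (p : ℝ)) ^ (m i).factorization p *
          (residueClass ((ordCompl[p] (m i) : ℕ) : ZMod N) (a i)).indicator 1 x) ^ 2 := by
        gcongr with x
        · exact hw.nonneg x
        · exact fibreMean_indicator_nonneg _ _ x
        · exact fibreMean_newlyCovered_le hp hm a x
    _ = ∑ i with m i ∈ newSmoothNumbers p, ∑ j with m j ∈ newSmoothNumbers p,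
          (1 / (p : ℝ)) ^ (m i).factorization p * (1 / (p : ℝ)) ^ (m j).factorization p *
            mass w (residueClass ((ordCompl[p] (m i) : ℕ) : ZMod N) (a i) ∩
              residueClass ((ordCompl[p] (m j) : ℕ) : ZMod N) (a j)) :=
        expect_mul_sum_indicator_sq _ _ _ _
    _ ≤ ∑ i with m i ∈ newSmoothNumbers p, ∑ j with m j ∈ newSmoothNumbers p,
          (1 / (p : ℝ)) ^ (m i).factorization p * (1 / (p : ℝ)) ^ (m j).factorization p *
            divisorDensity ((ordCompl[p] (m i)).lcm (ordCompl[p] (m j))) := by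
        have hmem {i : ι} (hi : m i ∈ newSmoothNumbers p) :=
          ordCompl_mem_smoothDivisors hp (mem_smoothDivisors_of_mem_newSmoothNumbers hm hi)
        gcongr with i hi j hj
        exact hw.mass_residueClass_inter_le (hmem (mem_filter.mp hi).2)
          (hmem (mem_filter.mp hj).2) _ _

lemma mass_mul_distortion_covered_le (hp : p.Prime) (hw : IsSmoothDensity p w)
    (hm : ∀ i, m i ∣ N) (hs : ∀ m₀, #{i | m i = m₀} ≤ s) (a : ι → ZMod N) :
    mass (w * distortion (smoothModulus N p : ZMod N)
        (covered a m (newSmoothNumbers p)))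
        (covered a m (p + 1).smoothNumbers) ≤
      mass w (covered a m p.smoothNumbers) + stepLoss N s p := by
  set B := covered a m (newSmoothNumbers p) with hB
  have hold : IsPeriodic (smoothModulus N p : ZMod N) (· ∈ covered a m p.smoothNumbers) :=
    isPeriodic_covered fun i hi =>
      natCast_dvd_smoothModulus _ (mem_smoothDivisors.mpr ⟨hm i, hi⟩)
  rw [← Set.union_sdiff_cancel (Nat.smoothNumbers_mono p.le_succ), covered_union,
    ← newSmoothNumbers, ← hB]
  refine (mass_union_le (mul_nonneg hw.nonneg (distortion_nonneg _ B)) _ _).trans ?_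
  rw [mass_mul_distortion_of_isPeriodic hw.periodic hold]
  gcongr
  exact (mass_mul_distortion_self_le hw.nonneg hw.periodic B).trans
    (second_moment_newlyCovered_le hp hw hm hs a)

lemma IsSmoothDensity.exists_succ (hw : IsSmoothDensity k w) (hm : ∀ i, m i ∣ N)
    (hs : ∀ m₀, #{i | m i = m₀} ≤ s) (a : ι → ZMod N) :
    ∃ w' : ZMod N → ℝ, IsSmoothDensity (k + 1) w' ∧
      mass w' (covered a m (k + 1).smoothNumbers) ≤
        mass w (covered a m k.smoothNumbers) + stepLoss N s k := by
  by_cases hk : k.Prime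
  · exact ⟨_, hw.mul_distortion hk (isPeriodic_newlyCovered hm a k),
      mass_mul_distortion_covered_le hk hw hm hs a⟩
  · refine ⟨w, hw.succ_of_not_prime hk, ?_⟩
    rw [Nat.smoothNumbers_succ hk]
    exact le_add_of_nonneg_right (stepLoss_nonneg N s k)

lemma exists_isSmoothDensity_mass_covered_le (hm : ∀ i, m i ∣ N)
    (hs : ∀ m₀, #{i | m i = m₀} ≤ s) (a : ι → ZMod N) (hyz : y ≤ z) :
    ∃ w : ZMod N → ℝ, IsSmoothDensity z w ∧
      mass w (covered a m z.smoothNumbers) ≤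
        mass 1 (covered a m y.smoothNumbers) + ∑ k ∈ Ico y z, stepLoss N s k := by
  induction z, hyz using Nat.le_induction with
  | base => exact ⟨1, isSmoothDensity_one y, by simp⟩
  | succ z hyz ih =>
    obtain ⟨w, hw, hcov⟩ := ih
    obtain ⟨w', hw', hcov'⟩ := hw.exists_succ hm hs a
    refine ⟨w', hw', ?_⟩
    rw [sum_Ico_succ_top hyz]
    linarith

/-- Once `z` exceeds `N`, every modulus has been treated, so a covering system covers mass `1`. -/
lemma one_le_mass_covered_add_sum_stepLoss (hm : ∀ i, m i ∣ N)
    (hs : ∀ m₀, #{i | m i = m₀} ≤ s) (hcov : ∀ x, ∃ i, (m i : ZMod N) ∣ x - a i) (y : ℕ) :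
    1 ≤ mass 1 (covered a m y.smoothNumbers) + ∑ k ∈ Ico y (y + N + 1), stepLoss N s k := by
  obtain ⟨w, hw, hle⟩ := exists_isSmoothDensity_mass_covered_le hm hs a
    (show y ≤ y + N + 1 by lia)
  have huniv : covered a m (y + N + 1).smoothNumbers = Set.univ :=
    Set.eq_univ_of_forall fun x => by
      obtain ⟨i, hi⟩ := hcov x
      refine ⟨i, Nat.mem_smoothNumbers'.mpr fun r _ hr => ?_, hi⟩
      have := Nat.le_of_dvd (NeZero.pos N) (hr.trans (hm i))
      lia
  rwa [huniv, hw.mass_univ] at hle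

lemma mass_one_covered_le (hm : ∀ i, m i ∣ N) (hs : ∀ m₀, #{i | m i = m₀} ≤ s)
    (a : ι → ZMod N) {S : Set ℕ} {D : Finset ℕ} (hSD : ∀ i, m i ∈ S → m i ∈ D) :
    mass 1 (covered a m S) ≤ s * ∑ l ∈ D, 1 / (l : ℝ) := by
  calc mass 1 (covered a m S)
      ≤ 𝔼 x, ∑ i with m i ∈ S, (residueClass (m i : ZMod N) (a i)).indicator 1 x :=
        expect_le_expect fun x _ => by
          rw [Pi.one_apply, one_mul]
          exact indicator_covered_le_sum a m S x
    _ = ∑ i with m i ∈ S, mass 1 (residueClass (m i : ZMod N) (a i)) := by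
        simp only [expect_sum_comm, mass, Pi.one_apply, one_mul]
    _ = ∑ i with m i ∈ S, 1 / (m i : ℝ) :=
        sum_congr rfl fun i _ => mass_one_residueClass_natCast (hm i) _
    _ ≤ s * ∑ l ∈ D, 1 / (l : ℝ) :=
        sum_comp_le (g := fun l : ℕ => 1 / (l : ℝ)) (fun i hi => hSD i (mem_filter.mp hi).2)
          (fun l => (card_le_card (filter_subset_filter _ (subset_univ _))).trans (hs l))
          fun _ _ => by positivity

end Sieve

/-! ### Small and large primes -/

lemma two_div_sq_mul_sqrt_le {k : ℕ} (hk : 1 ≤ k) :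
    (2 / (k : ℝ)) ^ 2 * √k ≤ 16 * (1 / √k - 1 / √((k + 1 : ℕ) : ℝ)) := by
  have hk₁ : (1 : ℝ) ≤ k := Nat.one_le_cast.mpr hk
  set u := √(k : ℝ)
  set v := √((k + 1 : ℕ) : ℝ)
  have hu : 0 < u := sqrt_pos.mpr (by linarith)
  have hv : 0 < v := sqrt_pos.mpr (by positivity)
  have hku : (k : ℝ) = u ^ 2 := (sq_sqrt k.cast_nonneg).symm
  have huv : v ^ 2 = u ^ 2 + 1 := by
    rw [sq_sqrt (Nat.cast_nonneg _), Nat.cast_add_one, hku]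
  have hconj : 1 / u - 1 / v = 1 / (u * (v * (u + v))) := by
    rw [div_sub_div _ _ hu.ne' hv.ne', div_eq_div_iff (by positivity) (by positivity)]
    linear_combination u * v * huv
  calc (2 / (k : ℝ)) ^ 2 * u = 16 * (1 / (u * (4 * u ^ 2))) := by
        rw [hku]
        field_simp
        norm_num
    _ ≤ 16 * (1 / (u * (v * (u + v)))) := by
        have hle : v * (u + v) ≤ 4 * u ^ 2 := by nlinarith [sq_nonneg (u - v)]
        gcongr
    _ = 16 * (1 / u - 1 / v) := by rw [hconj]

lemma exists_sum_stepLoss_le : ∃ C : ℝ, 0 < C ∧ ∀ (N s : ℕ) {y z : ℕ}, 1 ≤ y → y ≤ z →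
    ∑ k ∈ Ico y z, stepLoss N s k ≤ C * s ^ 2 / √y := by
  obtain ⟨C, hC, hsum⟩ := exists_sum_smoothNumbers_card_divisors_le
  refine ⟨16 * C, by positivity, fun N s {y z} hy hyz => ?_⟩
  have hstep : ∀ k ∈ Ico y z,
      stepLoss N s k ≤ 16 * C * s ^ 2 * (1 / √k - 1 / √((k + 1 : ℕ) : ℝ)) := by
    intro k hk
    have hk₁ : 1 ≤ k := hy.trans (mem_Ico.mp hk).1
    calc stepLoss N s k ≤ s ^ 2 * (2 / k) ^ 2 * (C * √k) := by
          rw [stepLoss]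
          gcongr
          exact hsum hk₁ fun _ hl => mem_smoothNumbers_of_mem_smoothDivisors hl
      _ = C * s ^ 2 * ((2 / k) ^ 2 * √k) := by ring
      _ ≤ C * s ^ 2 * (16 * (1 / √k - 1 / √((k + 1 : ℕ) : ℝ))) := by
          exact mul_le_mul_of_nonneg_left (two_div_sq_mul_sqrt_le hk₁) (by positivity)
      _ = 16 * C * s ^ 2 * (1 / √k - 1 / √((k + 1 : ℕ) : ℝ)) := by ring
  calc ∑ k ∈ Ico y z, stepLoss N s k
      ≤ 16 * C * s ^ 2 * ∑ k ∈ Ico y z, (1 / √k - 1 / √((k + 1 : ℕ) : ℝ)) := by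
        rw [mul_sum]
        exact sum_le_sum hstep
    _ = 16 * C * s ^ 2 * (1 / √y - 1 / √z) := by
        rw [← neg_inj, ← mul_neg, ← mul_neg, ← sum_neg_distrib]
        simp only [neg_sub]
        rw [sum_Ico_sub (fun k : ℕ => 1 / √(k : ℝ)) hyz]
    _ ≤ 16 * C * s ^ 2 * (1 / √y) := by
        gcongr
        exact sub_le_self _ (by positivity)
    _ = 16 * C * s ^ 2 / √y := mul_one_div _ _

lemma one_lt_log {x : ℝ} (hx : 3 ≤ x) : 1 < log x :=
  (lt_log_iff_exp_lt (by linarith)).mpr (exp_one_lt_three.trans_le hx)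

lemma mul_sum_smoothNumbers_one_div_lt_half {y : ℕ} (hy : 3 ≤ y) {D : Finset ℕ}
    (hD : ∀ l ∈ D, l ∈ y.smoothNumbers)
    (hDM : ∀ l ∈ D, exp (30 * log y ^ 2 / log (log y)) ≤ l) :
    y * ∑ l ∈ D, 1 / (l : ℝ) < 1 / 2 := by
  have hy₀ : (0 : ℝ) < y := Nat.cast_pos.mpr (by lia)
  have hL : 1 < log y := one_lt_log (Nat.ofNat_le_cast.mpr hy)
  set L := log y
  have hloglog : 0 < log L := log_pos hL
  -- The exponent for which `y ^ ε = log y`.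
  set ε := log L / L with hε
  have hyε : (y : ℝ) ^ ε = L := by
    rw [rpow_def_of_pos hy₀, mul_div_cancel₀ _ (by linarith), exp_log (by linarith)]
  have hε_half : ε ≤ 1 / 2 := by
    rw [div_le_iff₀ (by linarith)]
    have hlog_half := log_le_sub_one_of_pos (show 0 < L / 2 by linarith)
    rw [log_div (by linarith) two_ne_zero] at hlog_half
    linarith [log_two_lt_d9]
  calc y * ∑ l ∈ D, 1 / (l : ℝ)
      ≤ exp L * (exp (30 * L ^ 2 / log L) ^ (-ε) * exp (16 * L + 8 * (y : ℝ) ^ ε)) := by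
        rw [exp_log hy₀]
        gcongr
        exact sum_smoothNumbers_one_div_le (by lia) (by positivity) hε_half (exp_pos _) hD hDM
    _ = exp (-(5 * L)) := by
        rw [hyε, ← exp_mul, ← exp_add, ← exp_add, hε]
        congr 1
        field_simp
        ring
    _ < 1 / 2 := by
        rw [exp_neg, ← one_div]
        gcongr
        linarith [add_one_le_exp (5 * L)]

/-! ### Covering systems -/

lemma exists_modulus_le_of_cover_zmod : ∃ C : ℝ, 0 < C ∧
    ∀ {ι : Type*} [Fintype ι] {N : ℕ} [NeZero N] {a : ι → ZMod N} {m : ι → ℕ} {s y : ℕ},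
      (∀ i, m i ∣ N) → (∀ x, ∃ i, (m i : ZMod N) ∣ x - a i) → (∀ m₀, #{i | m i = m₀} ≤ s) →
      3 ≤ y → s ≤ y → C * s ^ 2 ≤ √y →
      ∃ i, (m i : ℝ) ≤ exp (30 * log y ^ 2 / log (log y)) := by
  obtain ⟨C, hC, hloss⟩ := exists_sum_stepLoss_le
  refine ⟨2 * C, by positivity, fun {ι} _ {N} _ {a m s y} hm hcov hs hy hsy hCs => ?_⟩
  by_contra! hlt
  set M := exp (30 * log y ^ 2 / log (log y))
  set D : Finset ℕ := {l ∈ smoothDivisors N y | M ≤ (l : ℝ)}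
  have hsmall : mass 1 (covered a m y.smoothNumbers) < 1 / 2 :=
    calc mass 1 (covered a m y.smoothNumbers) ≤ s * ∑ l ∈ D, 1 / (l : ℝ) :=
          mass_one_covered_le hm hs a fun i hi =>
            mem_filter.mpr ⟨mem_smoothDivisors.mpr ⟨hm i, hi⟩, (hlt i).le⟩
      _ ≤ y * ∑ l ∈ D, 1 / (l : ℝ) := by gcongr
      _ < 1 / 2 := mul_sum_smoothNumbers_one_div_lt_half hy
          (fun l hl => mem_smoothNumbers_of_mem_smoothDivisors (mem_filter.mp hl).1)
          fun l hl => (mem_filter.mp hl).2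
  have hlarge : ∑ k ∈ Ico y (y + N + 1), stepLoss N s k ≤ 1 / 2 := by
    have hsqrt : 0 < √(y : ℝ) := sqrt_pos.mpr (Nat.cast_pos.mpr (by lia))
    refine (hloss N s (by lia) (by lia)).trans ?_
    rw [div_le_iff₀ hsqrt]
    linarith
  linarith [one_le_mass_covered_add_sum_stepLoss hm hs hcov y]

theorem exists_modulus_le_of_cover_int : ∃ C : ℝ, 0 < C ∧
    ∀ {ι : Type*} [Fintype ι] {a : ι → ℤ} {m : ι → ℕ} {s y : ℕ},
      (∀ i, 1 ≤ m i) → (∀ x, ∃ i, (m i : ℤ) ∣ x - a i) → (∀ m₀, #{i | m i = m₀} ≤ s) →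
      3 ≤ y → s ≤ y → C * s ^ 2 ≤ √y →
      ∃ i, (m i : ℝ) ≤ exp (30 * log y ^ 2 / log (log y)) := by
  obtain ⟨C, hC, hmod⟩ := exists_modulus_le_of_cover_zmod
  refine ⟨C, hC, fun {ι} _ {a m s y} hm₁ hcov => ?_⟩
  set N := ∏ i, m i
  have : NeZero N := ⟨prod_ne_zero_iff.mpr fun i _ => Nat.one_le_iff_ne_zero.mp (hm₁ i)⟩
  have hm (i : ι) : m i ∣ N := dvd_prod_of_mem m (mem_univ i)
  refine hmod (a := fun i => (a i : ZMod N)) hm fun x => ?_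
  obtain ⟨x, rfl⟩ := ZMod.intCast_surjective x
  obtain ⟨i, hi⟩ := hcov x
  refine ⟨i, ?_⟩
  rw [← Int.cast_sub]
  exact (natCast_dvd_intCast_iff (hm i) _).mpr hi

/-! ### Choice of the threshold -/

lemma exists_mul_sq_le_sqrt_pow (C : ℝ) :
    ∃ j : ℕ, 1 ≤ j ∧ ∀ s : ℕ, C * s ^ 2 ≤ √(((s + 2) ^ (2 * j) : ℕ) : ℝ) := by
  obtain ⟨j, hj⟩ := pow_unbounded_of_one_lt C one_lt_two
  refine ⟨j + 2, by lia, fun s => ?_⟩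
  calc C * s ^ 2 ≤ 2 ^ j * s ^ 2 := by gcongr
    _ ≤ ((s : ℝ) + 2) ^ j * ((s : ℝ) + 2) ^ 2 := by
        gcongr
        · exact le_add_of_nonneg_left s.cast_nonneg
        · exact le_add_of_nonneg_right zero_le_two
    _ = √(((s + 2) ^ (2 * (j + 2)) : ℕ) : ℝ) := by
        rw [mul_comm 2, pow_mul, Nat.cast_pow, sqrt_sq (Nat.cast_nonneg _), ← pow_add]
        push_cast
        rfl

lemma log_sq_div_log_log_pow_le {s j : ℕ} (hs : 1 ≤ s) (hj : 1 ≤ j) :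
    30 * log ((s + 2) ^ (2 * j) : ℕ) ^ 2 / log (log ((s + 2) ^ (2 * j) : ℕ)) ≤
      480 * j ^ 2 * log (s + 1) ^ 2 / log (log (s + 2)) := by
  have hs₁ : (1 : ℝ) ≤ s := Nat.one_le_cast.mpr hs
  have hj₁ : (1 : ℝ) ≤ j := Nat.one_le_cast.mpr hj
  have ht : 1 < log ((s : ℝ) + 2) := one_lt_log (by linarith)
  have htwo : log ((s : ℝ) + 2) ≤ 2 * log (s + 1) :=
    calc log ((s : ℝ) + 2) ≤ log (((s : ℝ) + 1) ^ 2) := log_le_log (by linarith) (by nlinarith)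
      _ = 2 * log (s + 1) := by rw [log_pow, Nat.cast_ofNat]
  have hpow : log ((s + 2) ^ (2 * j) : ℕ) = 2 * j * log ((s : ℝ) + 2) := by
    push_cast
    rw [log_pow]
    push_cast
    rfl
  rw [hpow]
  have hloglog : 0 < log (log ((s : ℝ) + 2)) := log_pos ht
  refine div_le_div₀ (by positivity) ?_ hloglog (log_le_log (by linarith) (by nlinarith))
  calc 30 * (2 * j * log ((s : ℝ) + 2)) ^ 2 ≤ 30 * (2 * j * (2 * log (s + 1))) ^ 2 := by gcongr
    _ = 480 * j ^ 2 * log (s + 1) ^ 2 := by ring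

end CoveringSystems

/-- Bound on the smallest modulus of a covering system of ℤ of multiplicity `s`. -/
theorem minimum_modulus_int :
    ∃ c : ℝ, 0 < c ∧
      ∀ (n : ℕ) (hn : 0 < n) (a : Fin n → ℤ) (m : Fin n → ℕ) (s : ℕ),
        (∀ i : Fin n, 1 ≤ m i) →
        (∀ x : ℤ, ∃ i : Fin n, (m i : ℤ) ∣ (x - a i)) →
        (∀ m₀ : ℕ, (Finset.univ.filter fun i : Fin n => m i = m₀).card ≤ s) →
        (∃ m₀ : ℕ, (Finset.univ.filter fun i : Fin n => m i = m₀).card = s) →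
        ∃ i : Fin n, (m i : ℝ) ≤
          Real.exp (c * (Real.log (s + 1)) ^ 2 / Real.log (Real.log (s + 2))) := by
  obtain ⟨C, -, hmod⟩ := CoveringSystems.exists_modulus_le_of_cover_int
  obtain ⟨j, hj, hC⟩ := CoveringSystems.exists_mul_sq_le_sqrt_pow C
  refine ⟨480 * j ^ 2, by positivity, fun n hn a m s hm hcov hs _ => ?_⟩
  have hs₁ : 1 ≤ s :=
    (Finset.card_pos.mpr ⟨⟨0, hn⟩, by simp⟩).trans_le (hs (m ⟨0, hn⟩))
  have hy : s + 2 ≤ (s + 2) ^ (2 * j) := Nat.le_self_pow (by lia) _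
  obtain ⟨i, hi⟩ := hmod hm hcov hs (by lia) (by lia) (hC s)
  refine ⟨i, hi.trans (Real.exp_le_exp.mpr ?_)⟩
  exact CoveringSystems.log_sq_div_log_log_pow_le hs₁ hj
end
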